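/- arXiv:2211.01597 — 6 statements merged into one kernel-verified Lean document; each statement's English description precedes it below -/
import Mathlib

section
/- Let P be the set of primes p with p ≡ −3 (mod 8), and let A be the set of integers of the form (8j+1)(8k−3)(8l−3)(8m−3)(8n−3) where j,k ∈ ℤ, the numbers 8l−3, 8m−3, 8n−3 are primes in P, and j ≢ k+l+m+n (mod 2). Then S(C_4^2) = { 16m+1 : m ∈ ℤ } ∪ { 2^15 · p · (2m+1) : p ∈ P, m ∈ ℤ } ∪ { 2^16 · m : m ∈ ℤ } ∪ A. -/
open Matrix Complex

def groupDet4x4 (a : ZMod 4 × ZMod 4 → ℤ) : ℤ :=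
  Matrix.det (Matrix.of fun g h : ZMod 4 × ZMod 4 => a (g - h))

def S44 : Set ℤ := Set.range groupDet4x4

def Pset : Set ℤ := {p : ℤ | Prime p ∧ 0 < p ∧ p ≡ -3 [ZMOD 8]}

def Aset : Set ℤ :=
  {x : ℤ | ∃ j k l m n : ℤ, (8*l - 3) ∈ Pset ∧ (8*m - 3) ∈ Pset ∧ (8*n - 3) ∈ Pset ∧
    ¬ (j ≡ k + l + m + n [ZMOD 2]) ∧
    x = (8*j + 1) * (8*k - 3) * (8*l - 3) * (8*m - 3) * (8*n - 3)}

/-- The group determinant of the Klein four-group. -/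
def kleinForm (a b c d : ℤ) : ℤ :=
  (a + b + c + d) * (a + b - c - d) * (a - b + c - d) * (a - b - c + d)

/-- The product of the norms of the Gaussian integers `(a + c) + (b + d) i` and
`(a - c) + (b - d) i`. -/
def gaussForm (a b c d : ℤ) : ℤ :=
  ((a + c) ^ 2 + (b + d) ^ 2) * ((a - c) ^ 2 + (b - d) ^ 2)

/-- The group determinant of `C_4 × C_4` in terms of its four isotypic blocks. -/
def blockDet (e g h k : Fin 4 → ℤ) : ℤ :=
  kleinForm (e 0) (e 1) (e 2) (e 3) * gaussForm (g 0) (g 1) (g 2) (g 3) *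
    gaussForm (h 0) (h 2) (h 1) (h 3) * gaussForm (k 0) (k 1) (-k 3) (k 2)

/-- The character of `ZMod 4` sending `1` to `I`. -/
noncomputable def quarticChar : AddChar (ZMod 4) ℂ :=
  AddChar.zmodChar 4 Complex.I_pow_four

lemma quarticChar_zero : quarticChar 0 = 1 := AddChar.map_zero_eq_one _

lemma quarticChar_one : quarticChar 1 = I := by
  rw [quarticChar, AddChar.zmodChar_apply, show (1 : ZMod 4).val = 1 from rfl, pow_one]

lemma quarticChar_two : quarticChar 2 = -1 := by
  rw [quarticChar, AddChar.zmodChar_apply, show (2 : ZMod 4).val = 2 from rfl, Complex.I_sq]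

lemma quarticChar_three : quarticChar 3 = -I := by
  rw [quarticChar, AddChar.zmodChar_apply, show (3 : ZMod 4).val = 3 from rfl, Complex.I_pow_three]

lemma sum_zmod_four {M : Type*} [AddCommMonoid M] (f : ZMod 4 → M) :
    ∑ x, f x = f 0 + f 1 + f 2 + f 3 := Fin.sum_univ_four f

lemma prod_zmod_four {M : Type*} [CommMonoid M] (f : ZMod 4 → M) :
    ∏ x, f x = f 0 * f 1 * f 2 * f 3 := Fin.prod_univ_four f

/-- The character table of `ZMod 4`. -/
noncomputable def fourierMatrix : Matrix (ZMod 4) (ZMod 4) ℂ :=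
  Matrix.of fun x s => quarticChar (-(x * s))

lemma det_fourierMatrix_ne_zero : fourierMatrix.det ≠ 0 := by
  have h : fourierMatrix * (Matrix.of fun s y => quarticChar (s * y)) = (4 : ℂ) • 1 := by
    have key : ∀ u : ZMod 4, ∑ s, quarticChar (s * u) = if u = 0 then 4 else 0 := by
      intro u
      have hu : u = 0 ∨ u = 1 ∨ u = 2 ∨ u = 3 := by decide +revert
      rw [sum_zmod_four]
      rcases hu with rfl | rfl | rfl | rfl
      · norm_num [quarticChar_zero]
      · rw [show (0 : ZMod 4) * 1 = 0 from rfl, show (1 : ZMod 4) * 1 = 1 from rfl,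
          show (2 : ZMod 4) * 1 = 2 from rfl, show (3 : ZMod 4) * 1 = 3 from rfl,
          quarticChar_zero, quarticChar_one, quarticChar_two, quarticChar_three,
          if_neg (by decide)]
        ring
      · rw [show (0 : ZMod 4) * 2 = 0 from rfl, show (1 : ZMod 4) * 2 = 2 from rfl,
          show (2 : ZMod 4) * 2 = 0 from rfl, show (3 : ZMod 4) * 2 = 2 from rfl,
          quarticChar_zero, quarticChar_two, if_neg (by decide)]
        ring
      · rw [show (0 : ZMod 4) * 3 = 0 from rfl, show (1 : ZMod 4) * 3 = 3 from rfl,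
          show (2 : ZMod 4) * 3 = 2 from rfl, show (3 : ZMod 4) * 3 = 1 from rfl,
          quarticChar_zero, quarticChar_one, quarticChar_two, quarticChar_three,
          if_neg (by decide)]
        ring
    ext x y
    have hs : ∀ s, quarticChar (-(x * s)) * quarticChar (s * y) = quarticChar (s * (y - x)) :=
      fun s => by rw [← AddChar.map_add_eq_mul]; congr 1; ring
    simp only [fourierMatrix, Matrix.mul_apply, Matrix.of_apply, hs, key, sub_eq_zero,
      Matrix.smul_apply, Matrix.one_apply, smul_eq_mul, eq_comm (a := y), mul_ite, mul_one,
      mul_zero]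
  intro h0
  have := congrArg Matrix.det h
  rw [Matrix.det_mul, h0, zero_mul, Matrix.det_smul, Matrix.det_one] at this
  norm_num at this

lemma groupDet4x4_eq_prod (a : ZMod 4 × ZMod 4 → ℤ) :
    (groupDet4x4 a : ℂ) = ∏ χ : ZMod 4 × ZMod 4, ∑ u : ZMod 4 × ZMod 4,
      (a u : ℂ) * (quarticChar (u.1 * χ.1) * quarticChar (u.2 * χ.2)) := by
  set F : Matrix (ZMod 4 × ZMod 4) (ZMod 4 × ZMod 4) ℂ :=
    Matrix.kroneckerMap (· * ·) fourierMatrix fourierMatrix with hF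
  have hdet : F.det ≠ 0 := by
    rw [hF, Matrix.det_kronecker]
    exact mul_ne_zero (pow_ne_zero _ det_fourierMatrix_ne_zero)
      (pow_ne_zero _ det_fourierMatrix_ne_zero)
  set M : Matrix (ZMod 4 × ZMod 4) (ZMod 4 × ZMod 4) ℂ :=
    Matrix.of fun g h => (a (g - h) : ℂ) with hM
  have hcast : (groupDet4x4 a : ℂ) = M.det := by
    rw [groupDet4x4, Int.cast_det]
    rfl
  have hMF : M * F = F * Matrix.diagonal fun χ => ∑ u : ZMod 4 × ZMod 4,
      (a u : ℂ) * (quarticChar (u.1 * χ.1) * quarticChar (u.2 * χ.2)) := by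
    ext g χ
    rw [Matrix.mul_diagonal, Matrix.mul_apply, Finset.mul_sum,
      ← Equiv.sum_comp (Equiv.subLeft g)]
    refine Finset.sum_congr rfl fun u _ => ?_
    simp only [hM, hF, fourierMatrix, Matrix.of_apply, Matrix.kroneckerMap_apply,
      Equiv.subLeft_apply, sub_sub_cancel, Prod.fst_sub, Prod.snd_sub]
    have split : ∀ x y s : ZMod 4, quarticChar (-((x - y) * s)) =
        quarticChar (-(x * s)) * quarticChar (y * s) := fun x y s => by
      rw [← AddChar.map_add_eq_mul]; congr 1; ring
    rw [split, split]
    ring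
  have h := congrArg Matrix.det hMF
  rw [Matrix.det_mul, Matrix.det_mul, Matrix.det_diagonal, mul_comm] at h
  rw [hcast]
  exact mul_left_cancel₀ hdet h

lemma groupDet4x4_eq_blockDet (a : ZMod 4 × ZMod 4 → ℤ) :
    groupDet4x4 a = blockDet
      ![a (0, 0) + a (2, 0) + a (0, 2) + a (2, 2), a (0, 1) + a (2, 1) + a (0, 3) + a (2, 3),
        a (1, 0) + a (3, 0) + a (1, 2) + a (3, 2), a (1, 1) + a (3, 1) + a (1, 3) + a (3, 3)]
      ![a (0, 0) + a (2, 0) - a (0, 2) - a (2, 2), a (0, 1) + a (2, 1) - a (0, 3) - a (2, 3),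
        a (1, 0) + a (3, 0) - a (1, 2) - a (3, 2), a (1, 1) + a (3, 1) - a (1, 3) - a (3, 3)]
      ![a (0, 0) - a (2, 0) + a (0, 2) - a (2, 2), a (0, 1) - a (2, 1) + a (0, 3) - a (2, 3),
        a (1, 0) - a (3, 0) + a (1, 2) - a (3, 2), a (1, 1) - a (3, 1) + a (1, 3) - a (3, 3)]
      ![a (0, 0) - a (2, 0) - a (0, 2) + a (2, 2), a (0, 1) - a (2, 1) - a (0, 3) + a (2, 3),
        a (1, 0) - a (3, 0) - a (1, 2) + a (3, 2), a (1, 1) - a (3, 1) - a (1, 3) + a (3, 3)] := by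
  set L : ZMod 4 → ZMod 4 → ℂ := fun s t => ∑ u : ZMod 4 × ZMod 4,
    (a u : ℂ) * (quarticChar (u.1 * s) * quarticChar (u.2 * t)) with hL
  simp only [Fintype.sum_prod_type, sum_zmod_four] at hL
  have norm_eq : ∀ x y : ℂ, x ^ 2 + y ^ 2 = (x + y * I) * (x - y * I) := fun x y => by
    linear_combination y ^ 2 * I_sq
  rw [← Int.cast_inj (α := ℂ), groupDet4x4_eq_prod, Fintype.prod_prod_type]
  change ∏ s, ∏ t, L s t = _
  simp only [prod_zmod_four, blockDet, kleinForm, gaussForm, Matrix.cons_val]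
  push_cast
  simp only [norm_eq]
  rw [show L 0 0 * L 0 1 * L 0 2 * L 0 3 * (L 1 0 * L 1 1 * L 1 2 * L 1 3) *
      (L 2 0 * L 2 1 * L 2 2 * L 2 3) * (L 3 0 * L 3 1 * L 3 2 * L 3 3) =
      L 0 0 * L 2 0 * L 0 2 * L 2 2 * ((L 0 1 * L 0 3) * (L 2 1 * L 2 3)) *
      ((L 1 0 * L 3 0) * (L 1 2 * L 3 2)) * ((L 1 1 * L 3 3) * (L 3 1 * L 1 3)) by ring]
  simp only [hL, show (2 : ZMod 4) * 2 = 0 from rfl, show (2 : ZMod 4) * 3 = 2 from rfl,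
    show (3 : ZMod 4) * 2 = 2 from rfl, show (3 : ZMod 4) * 3 = 1 from rfl, mul_zero, zero_mul,
    mul_one, one_mul, quarticChar_zero, quarticChar_one, quarticChar_two, quarticChar_three,
    mul_neg, neg_mul, neg_neg, I_mul_I]
  congr 1
  · congr 1
    · congr 1
      · congr 1
        · congr 1
          · congr 1 <;> ring
          · ring
        · ring
      · congr 1 <;> congr 1 <;> ring
    · congr 1 <;> congr 1 <;> ring
  · congr 1 <;> congr 1 <;> ring

/-- The congruences cutting out the integral group ring inside the product of its blocks. -/
def Compatible (e g h k : Fin 4 → ℤ) : Prop :=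
  ∀ i, e i ≡ g i [ZMOD 2] ∧ e i ≡ h i [ZMOD 2] ∧ e i + g i + h i + k i ≡ 0 [ZMOD 4]

lemma mem_S44_iff {x : ℤ} : x ∈ S44 ↔ ∃ e g h k, Compatible e g h k ∧ x = blockDet e g h k := by
  constructor
  · rintro ⟨a, rfl⟩
    refine ⟨_, _, _, _, ?_, groupDet4x4_eq_blockDet a⟩
    intro i
    fin_cases i <;> simp [Int.ModEq] <;> omega
  · rintro ⟨e, g, h, k, hc, rfl⟩
    have hex : ∀ i, ∃ q r s t : ℤ, e i = q + r + s + t ∧ g i = q + r - s - t ∧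
        h i = q - r + s - t ∧ k i = q - r - s + t := by
      intro i
      obtain ⟨h1, h2, h3⟩ := hc i
      simp only [Int.ModEq] at h1 h2 h3
      exact ⟨(e i + g i + h i + k i) / 4, (e i + g i - h i - k i) / 4,
        (e i - g i + h i - k i) / 4, (e i - g i - h i + k i) / 4, by omega⟩
    choose q r s t he hg hh hk using hex
    refine ⟨fun u => (![![q 0, q 1, s 0, s 1], ![q 2, q 3, s 2, s 3], ![r 0, r 1, t 0, t 1],
      ![r 2, r 3, t 2, t 3]] : Fin 4 → Fin 4 → ℤ) u.1 u.2, ?_⟩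
    rw [groupDet4x4_eq_blockDet]
    refine congr (congr (congr (congrArg blockDet ?_) ?_) ?_) ?_ <;> ext i <;> fin_cases i
    exacts [(he 0).symm, (he 1).symm, (he 2).symm, (he 3).symm,
      (hg 0).symm, (hg 1).symm, (hg 2).symm, (hg 3).symm,
      (hh 0).symm, (hh 1).symm, (hh 2).symm, (hh 3).symm,
      (hk 0).symm, (hk 1).symm, (hk 2).symm, (hk 3).symm]

lemma mod_eight_eq_one_of_prime_factors {n : ℕ} (hn : n ≠ 0)
    (h : ∀ p : ℕ, p.Prime → p ∣ n → p % 8 = 1) : n % 8 = 1 := by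
  induction n using induction_on_primes with
  | zero => exact absurd rfl hn
  | one => rfl
  | prime_mul p a hp ih =>
    rw [Nat.mul_mod, h p hp (dvd_mul_right p a),
      ih (right_ne_zero_of_mul hn) fun q hq hqa => h q hq (hqa.mul_left p)]

lemma exists_Pset_dvd_of_sq_add_sq {n a b : ℤ} (hn : n = a ^ 2 + b ^ 2) (h5 : n % 8 = 5) :
    ∃ p ∈ Pset, p ∣ n := by
  lift n to ℕ using hn ▸ by positivity
  have hsum : n = a.natAbs ^ 2 + b.natAbs ^ 2 := by
    zify
    simpa using hn
  obtain ⟨r, m, rfl, hsq⟩ := Nat.eq_sq_add_sq_iff_eq_sq_mul.1 ⟨_, _, hsum⟩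
  have h5' : r ^ 2 * m % 8 = 5 := by exact_mod_cast h5
  have hm : m % 8 = 5 := by
    have hr : r ^ 2 % 8 = 1 := by
      have hr8 : r % 8 = 0 ∨ r % 8 = 1 ∨ r % 8 = 2 ∨ r % 8 = 3 ∨ r % 8 = 4 ∨ r % 8 = 5 ∨
        r % 8 = 6 ∨ r % 8 = 7 := by omega
      rw [Nat.mul_mod, Nat.pow_mod] at h5'
      rw [Nat.pow_mod]
      rcases hr8 with h | h | h | h | h | h | h | h <;> simp only [h] at h5' ⊢ <;> omega
    rw [Nat.mul_mod, hr, one_mul, Nat.mod_mod] at h5'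
    exact h5'
  by_contra! hno
  have := mod_eight_eq_one_of_prime_factors (n := m) (by omega) fun p hp hpm => by
    have h4 := Nat.mod_four_ne_three_of_mem_primeFactors_of_isSquare_neg_one
      (Nat.mem_primeFactors.2 ⟨hp, hpm, by omega⟩) hsq
    have h2 : p ≠ 2 := by
      rintro rfl
      omega
    have h3 := hp.eq_two_or_odd.resolve_left h2
    have h8 : p % 8 ≠ 5 := fun h8 => hno p
      ⟨Nat.prime_iff_prime_int.1 hp, by exact_mod_cast hp.pos, by
        simp only [Int.ModEq]; omega⟩
      (by exact_mod_cast hpm.mul_left (r ^ 2))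
    omega
  omega

lemma gaussForm_eq_sq_add_sq (a b c d : ℤ) : gaussForm a b c d =
    (a ^ 2 - c ^ 2 - (b ^ 2 - d ^ 2)) ^ 2 + (2 * (a * b - c * d)) ^ 2 := by
  unfold gaussForm; ring

/-- Every prime of `Pset` has a normalised representation as a sum of two squares. -/
lemma exists_sq_add_sq_of_mem_Pset {p : ℤ} (hp : p ∈ Pset) :
    ∃ s t γ : ℤ, (γ = 0 ∨ γ = 2) ∧ p = (8 * s + 1 + γ) ^ 2 + (8 * t + 2) ^ 2 := by
  obtain ⟨hprime, hpos, hmod⟩ := hp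
  lift p to ℕ using hpos.le
  have : Fact p.Prime := ⟨Nat.prime_iff_prime_int.mpr hprime⟩
  obtain ⟨a, b, hab⟩ := Nat.Prime.sq_add_sq (p := p) (by simp only [Int.ModEq] at hmod; omega)
  have hab : (p : ℤ) = (a : ℤ) ^ 2 + (b : ℤ) ^ 2 := by exact_mod_cast hab.symm
  rw [hab] at hmod ⊢
  generalize (a : ℤ) = a at *
  generalize (b : ℤ) = b at *
  clear hab hprime hpos this
  wlog hodd : a % 2 = 1 generalizing a b
  · have hb : b % 2 = 1 := by
      by_contra hb
      have h1 : (a ^ 2 + b ^ 2) % 2 = 0 := by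
        rw [Int.add_emod, pow_two, pow_two, Int.mul_emod a, Int.mul_emod b,
          show a % 2 = 0 by omega, show b % 2 = 0 by omega]
        rfl
      simp only [Int.ModEq] at hmod
      omega
    rw [add_comm] at hmod ⊢
    exact this _ _ hmod hb
  have hb : b % 8 = 2 ∨ b % 8 = 6 := by
    have ha8 : a % 8 = 1 ∨ a % 8 = 3 ∨ a % 8 = 5 ∨ a % 8 = 7 := by omega
    have hb8 : b % 8 = 0 ∨ b % 8 = 1 ∨ b % 8 = 2 ∨ b % 8 = 3 ∨ b % 8 = 4 ∨ b % 8 = 5 ∨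
      b % 8 = 6 ∨ b % 8 = 7 := by omega
    rw [Int.ModEq, Int.add_emod, pow_two, pow_two, Int.mul_emod a, Int.mul_emod b] at hmod
    rcases ha8 with h | h | h | h <;> rcases hb8 with h' | h' | h' | h' | h' | h' | h' | h' <;>
      simp [h, h'] at hmod ⊢
  have hA : ∃ s γ : ℤ, (γ = 0 ∨ γ = 2) ∧ a ^ 2 = (8 * s + 1 + γ) ^ 2 := by
    have ha8 : a % 8 = 1 ∨ a % 8 = 3 ∨ a % 8 = 5 ∨ a % 8 = 7 := by omega
    rcases ha8 with h | h | h | h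
    · exact ⟨a / 8, 0, .inl rfl, by rw [show 8 * (a / 8) + 1 + 0 = a by omega]⟩
    · exact ⟨a / 8, 2, .inr rfl, by rw [show 8 * (a / 8) + 1 + 2 = a by omega]⟩
    · exact ⟨-a / 8, 2, .inr rfl, by rw [show 8 * (-a / 8) + 1 + 2 = -a by omega, neg_sq]⟩
    · exact ⟨-a / 8, 0, .inl rfl, by rw [show 8 * (-a / 8) + 1 + 0 = -a by omega, neg_sq]⟩
  have hB : ∃ t : ℤ, b ^ 2 = (8 * t + 2) ^ 2 := by
    rcases hb with h | h
    · exact ⟨b / 8, by rw [show 8 * (b / 8) + 2 = b by omega]⟩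
    · exact ⟨-b / 8, by rw [show 8 * (-b / 8) + 2 = -b by omega, neg_sq]⟩
  obtain ⟨s, γ, hγ, hs⟩ := hA
  obtain ⟨t, ht⟩ := hB
  exact ⟨s, t, γ, hγ, by rw [hs, ht]⟩

lemma compatible_vec {e₀ e₁ e₂ e₃ g₀ g₁ g₂ g₃ h₀ h₁ h₂ h₃ k₀ k₁ k₂ k₃ : ℤ} :
    Compatible ![e₀, e₁, e₂, e₃] ![g₀, g₁, g₂, g₃] ![h₀, h₁, h₂, h₃] ![k₀, k₁, k₂, k₃] ↔
      ((e₀ - g₀) % 2 = 0 ∧ (e₀ - h₀) % 2 = 0 ∧ (e₀ + g₀ + h₀ + k₀) % 4 = 0) ∧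
      ((e₁ - g₁) % 2 = 0 ∧ (e₁ - h₁) % 2 = 0 ∧ (e₁ + g₁ + h₁ + k₁) % 4 = 0) ∧
      ((e₂ - g₂) % 2 = 0 ∧ (e₂ - h₂) % 2 = 0 ∧ (e₂ + g₂ + h₂ + k₂) % 4 = 0) ∧
      ((e₃ - g₃) % 2 = 0 ∧ (e₃ - h₃) % 2 = 0 ∧ (e₃ + g₃ + h₃ + k₃) % 4 = 0) := by
  simp only [Compatible, Fin.forall_fin_succ, Int.ModEq]
  simp
  omega

lemma sixteen_mul_add_one_mem (m : ℤ) : 16 * m + 1 ∈ S44 := by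
  refine mem_S44_iff.2 ⟨![1 + 4 * m, 4 * m, 4 * m, 4 * m], ![1, 0, 0, 0], ![1, 0, 0, 0],
    ![1, 0, 0, 0], compatible_vec.2 (by omega), ?_⟩
  simp [blockDet, kleinForm, gaussForm]
  ring

lemma two_pow_sixteen_mul_mem (m : ℤ) : 2 ^ 16 * m ∈ S44 := by
  obtain ⟨n, rfl | rfl⟩ := m.even_or_odd'
  · refine mem_S44_iff.2 ⟨![1 - 4 * n, 1 - 4 * n, -2 - 4 * n, -4 * n], ![1, 1, 0, 0],
      ![1, 1, 2, 0], ![1, 1, 0, 0], compatible_vec.2 (by omega), ?_⟩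
    simp [blockDet, kleinForm, gaussForm]
    ring
  · refine mem_S44_iff.2 ⟨![3 + 4 * (-n - 1), 3 + 4 * (-n - 1), 2 + 4 * (-n - 1), 4 * (-n - 1)],
      ![-1, -1, 0, 0], ![-1, -1, -2, 0], ![-1, -1, 0, 0], compatible_vec.2 (by omega), ?_⟩
    simp [blockDet, kleinForm, gaussForm]
    ring

lemma two_pow_fifteen_mul_mem {p : ℤ} (hp : p ∈ Pset) (m : ℤ) :
    2 ^ 15 * p * (2 * m + 1) ∈ S44 := by
  obtain ⟨u, v, hpu⟩ : ∃ u v : ℤ, 2 * p = (8 * u + 1) ^ 2 + (8 * v - 3) ^ 2 := by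
    obtain ⟨s, t, γ, rfl | rfl, rfl⟩ := exists_sq_add_sq_of_mem_Pset hp
    · exact ⟨t - s, -s - t, by ring⟩
    · exact ⟨s - t, s + t + 1, by ring⟩
  obtain ⟨n, rfl | rfl⟩ := m.even_or_odd'
  · refine mem_S44_iff.2 ⟨![1 + 4 * n, 3 + 4 * n, 4 * n, 4 * n],
      ![4 * u + 1, 4 * v - 1, 4 * u, 4 * v - 2], ![1, 1, 0, 2], ![1, 1, 0, 0],
      compatible_vec.2 (by omega), ?_⟩
    simp [blockDet, kleinForm, gaussForm]
    linear_combination 2 ^ 14 * (4 * n + 1) * hpu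
  · refine mem_S44_iff.2 ⟨![1 + 4 * (-n - 1), -1 + 4 * (-n - 1), 2 + 4 * (-n - 1),
      2 + 4 * (-n - 1)], ![4 * u + 1, 4 * v - 1, 4 * u, 4 * v - 2], ![1, 1, 2, 0], ![1, 1, 0, 0],
      compatible_vec.2 (by omega), ?_⟩
    simp [blockDet, kleinForm, gaussForm]
    linear_combination 2 ^ 14 * (4 * n + 3) * hpu

lemma mul_mem_of_mod_sixteen {p q r c : ℤ} (hp : p ∈ Pset) (hq : q ∈ Pset) (hr : r ∈ Pset)
    (h9 : c * p * q * r % 16 = 9) : c * p * q * r ∈ S44 := by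
  have key : ∀ p ∈ Pset, ∃ s t γ : ℤ, (γ = 0 ∨ γ = 2) ∧
      p = (8 * s + 1 + γ) ^ 2 + (8 * t + 2) ^ 2 ∧ p % 16 = 5 + 4 * γ := by
    intro p hp
    obtain ⟨s, t, γ, rfl | rfl, rfl⟩ := exists_sq_add_sq_of_mem_Pset hp
    · refine ⟨s, t, 0, .inl rfl, rfl, ?_⟩
      ring_nf
      omega
    · refine ⟨s, t, 2, .inr rfl, rfl, ?_⟩
      ring_nf
      omega
  obtain ⟨s, t, γ, hγ, hp, hp16⟩ := key p hp
  obtain ⟨s', t', γ', hγ', hq, hq16⟩ := key q hq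
  obtain ⟨s'', t'', γ'', hγ'', hr, hr16⟩ := key r hr
  have hc : (γ + γ' + γ'') % 4 = 0 ∧ c % 16 = 13 ∨ (γ + γ' + γ'') % 4 = 2 ∧ c % 16 = 5 := by
    rw [Int.mul_emod, Int.mul_emod (c * p), Int.mul_emod c, hp16, hq16, hr16] at h9
    rcases hγ with rfl | rfl <;> rcases hγ' with rfl | rfl <;> rcases hγ'' with rfl | rfl <;>
      norm_num at h9 ⊢ <;> omega
  have hγsq : (γ - 1) ^ 2 = 1 := by rcases hγ with rfl | rfl <;> rfl
  have hγsq' : (γ' - 1) ^ 2 = 1 := by rcases hγ' with rfl | rfl <;> rfl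
  have hγsq'' : (γ'' - 1) ^ 2 = 1 := by rcases hγ'' with rfl | rfl <;> rfl
  have hg : gaussForm (4 * s + γ) (4 * t + 1) (4 * s + 1) (4 * t + 1) = p := by
    rw [hp, gaussForm]
    linear_combination ((8 * s + 1 + γ) ^ 2 + (8 * t + 2) ^ 2) * hγsq
  have hh : gaussForm (4 * s' + γ') (4 * t' + 1) (4 * s' + 1) (4 * t' + 1) = q := by
    rw [hq, gaussForm]
    linear_combination ((8 * s' + 1 + γ') ^ 2 + (8 * t' + 2) ^ 2) * hγsq'
  have hk : gaussForm (4 * s'' + γ'') (4 * t'' + 1) (4 * s'' + 1) (4 * t'' + 1) = r := by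
    rw [hr, gaussForm]
    linear_combination ((8 * s'' + 1 + γ'') ^ 2 + (8 * t'' + 2) ^ 2) * hγsq''
  obtain ⟨e₀, e₁, e₂, e₃, hE, h0, h1, h2, h3⟩ : ∃ e₀ e₁ e₂ e₃ : ℤ, kleinForm e₀ e₁ e₂ e₃ = c ∧
      (e₀ + γ + γ' + γ'') % 4 = 0 ∧ e₁ % 4 = 1 ∧ e₂ % 4 = 1 ∧ e₃ % 4 = 3 := by
    rcases hc with ⟨hγ4, hc⟩ | ⟨hγ4, hc⟩
    · obtain ⟨m, rfl⟩ : ∃ m, c = 16 * m - 3 := ⟨(c + 3) / 16, by omega⟩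
      refine ⟨4 * m, 1 - 4 * m, 1 - 4 * m, 4 * m - 1, by rw [kleinForm]; ring, ?_⟩
      omega
    · obtain ⟨m, rfl⟩ : ∃ m, c = 5 - 16 * m := ⟨(5 - c) / 16, by omega⟩
      refine ⟨4 * m - 2, 1 - 4 * m, 1 - 4 * m, 4 * m - 1, by rw [kleinForm]; ring, ?_⟩
      omega
  refine mem_S44_iff.2 ⟨![e₀, e₁, e₂, e₃], ![4 * s + γ, 4 * t + 1, 4 * s + 1, 4 * t + 1],
    ![4 * s' + γ', 4 * s' + 1, 4 * t' + 1, 4 * t' + 1],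
    ![4 * s'' + γ'', 4 * t'' + 1, 4 * t'' + 1, -(4 * s'' + 1)], compatible_vec.2 (by omega), ?_⟩
  simp only [blockDet, Matrix.cons_val, neg_neg, hE, hg, hh, hk]

lemma mem_Aset_iff {x : ℤ} : x ∈ Aset ↔
    x % 16 = 9 ∧ ∃ c, ∃ p ∈ Pset, ∃ q ∈ Pset, ∃ r ∈ Pset, x = c * p * q * r := by
  have key : ∀ j k l m n : ℤ, (8 * j + 1) * (8 * k - 3) * (8 * l - 3) * (8 * m - 3) *
      (8 * n - 3) % 16 = (1 + 8 * (j + k + l + m + n)) % 16 := by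
    intro j k l m n
    ring_nf
    omega
  constructor
  · rintro ⟨j, k, l, m, n, hl, hm, hn, hne, rfl⟩
    refine ⟨?_, _, _, hl, _, hm, _, hn, rfl⟩
    simp only [Int.ModEq] at hne
    rw [key]
    omega
  · rintro ⟨h9, c, p, hp, q, hq, r, hr, rfl⟩
    have form : ∀ p ∈ Pset, ∃ l, p = 8 * l - 3 := by
      rintro p ⟨-, -, h⟩
      simp only [Int.ModEq] at h
      exact ⟨(p + 3) / 8, by omega⟩
    obtain ⟨l, rfl⟩ := form p hp
    obtain ⟨m, rfl⟩ := form q hq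
    obtain ⟨n, rfl⟩ := form r hr
    obtain ⟨k, rfl⟩ : ∃ k, c = 8 * k - 3 := by
      have h8 : c * (8 * l - 3) * (8 * m - 3) * (8 * n - 3) % 8 = -27 * c % 8 := by
        ring_nf
        omega
      exact ⟨(c + 3) / 8, by omega⟩
    refine ⟨0, k, l, m, n, hp, hq, hr, ?_, by ring⟩
    have := key 0 k l m n
    simp only [Int.ModEq]
    norm_num at this
    omega

lemma sq_of_odd {a : ℤ} (ha : a % 2 = 1) : ∃ t, a ^ 2 = 8 * t + 1 := by
  obtain ⟨n, rfl⟩ : ∃ n, a = 2 * n + 1 := ⟨a / 2, by omega⟩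
  obtain ⟨m, hm⟩ := Int.even_mul_succ_self n
  exact ⟨m, by linear_combination 4 * hm⟩

lemma sq_of_even {a : ℤ} (ha : a % 2 = 0) : ∃ t, a ^ 2 = 8 * t + 2 * a := by
  obtain ⟨n, rfl⟩ : ∃ n, a = 2 * n := ⟨a / 2, by omega⟩
  obtain ⟨m, hm⟩ := Int.even_mul_pred_self n
  exact ⟨m, by linear_combination 4 * hm⟩

lemma gaussForm_eq_sub (a b c d : ℤ) : gaussForm a b c d =
    (a ^ 2 + b ^ 2 + c ^ 2 + d ^ 2) ^ 2 - 4 * (a * c + b * d) ^ 2 := by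
  unfold gaussForm; ring

lemma kleinForm_eq_sub (a b c d : ℤ) : kleinForm a b c d =
    (a ^ 2 + b ^ 2 - c ^ 2 - d ^ 2) ^ 2 - 4 * (a * b - c * d) ^ 2 := by
  unfold kleinForm; ring

lemma gaussForm_mod_of_one_odd {a b c d : ℤ} (ha : a % 2 = 1) (hb : b % 2 = 0)
    (hc : c % 2 = 0) (hd : d % 2 = 0) : gaussForm a b c d % 16 = (1 + 4 * (b + c + d)) % 16 := by
  rw [gaussForm_eq_sub]
  obtain ⟨t, ht⟩ := sq_of_odd ha
  obtain ⟨u, hu⟩ := sq_of_even hb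
  obtain ⟨v, hv⟩ := sq_of_even hc
  obtain ⟨w, hw⟩ := sq_of_even hd
  rw [ht, hu, hv, hw]
  clear ht hu hv hw
  obtain ⟨b, rfl⟩ : ∃ n, b = 2 * n := ⟨b / 2, by omega⟩
  obtain ⟨c, rfl⟩ : ∃ n, c = 2 * n := ⟨c / 2, by omega⟩
  obtain ⟨d, rfl⟩ : ∃ n, d = 2 * n := ⟨d / 2, by omega⟩
  ring_nf
  omega

lemma kleinForm_mod_of_one_odd {a b c d : ℤ} (ha : a % 2 = 1) (hb : b % 2 = 0)
    (hc : c % 2 = 0) (hd : d % 2 = 0) : kleinForm a b c d % 16 = (1 + 4 * (b + c + d)) % 16 := by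
  rw [kleinForm_eq_sub]
  obtain ⟨t, ht⟩ := sq_of_odd ha
  obtain ⟨u, hu⟩ := sq_of_even hb
  obtain ⟨v, hv⟩ := sq_of_even hc
  obtain ⟨w, hw⟩ := sq_of_even hd
  rw [ht, hu, hv, hw]
  clear ht hu hv hw
  obtain ⟨b, rfl⟩ : ∃ n, b = 2 * n := ⟨b / 2, by omega⟩
  obtain ⟨c, rfl⟩ : ∃ n, c = 2 * n := ⟨c / 2, by omega⟩
  obtain ⟨d, rfl⟩ : ∃ n, d = 2 * n := ⟨d / 2, by omega⟩
  ring_nf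
  omega

lemma gaussForm_mod_of_three_odd {a b c d : ℤ} (ha : a % 2 = 0) (hb : b % 2 = 1)
    (hc : c % 2 = 1) (hd : d % 2 = 1) : gaussForm a b c d % 16 = (5 + 4 * a) % 16 := by
  rw [gaussForm_eq_sub]
  obtain ⟨t, ht⟩ := sq_of_even ha
  obtain ⟨u, hu⟩ := sq_of_odd hb
  obtain ⟨v, hv⟩ := sq_of_odd hc
  obtain ⟨w, hw⟩ := sq_of_odd hd
  rw [ht, hu, hv, hw]
  clear ht hu hv hw
  obtain ⟨a, rfl⟩ : ∃ n, a = 2 * n := ⟨a / 2, by omega⟩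
  obtain ⟨b, rfl⟩ : ∃ n, b = 2 * n + 1 := ⟨b / 2, by omega⟩
  obtain ⟨c, rfl⟩ : ∃ n, c = 2 * n + 1 := ⟨c / 2, by omega⟩
  obtain ⟨d, rfl⟩ : ∃ n, d = 2 * n + 1 := ⟨d / 2, by omega⟩
  obtain ⟨x, hx⟩ := sq_of_odd (a := 2 * a * (2 * c + 1) + (2 * b + 1) * (2 * d + 1)) (by ring_nf; omega)
  rw [hx]
  ring_nf
  omega

lemma kleinForm_mod_of_three_odd {a b c d : ℤ} (ha : a % 2 = 0) (hb : b % 2 = 1)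
    (hc : c % 2 = 1) (hd : d % 2 = 1) : kleinForm a b c d % 16 = (13 + 4 * a) % 16 := by
  rw [kleinForm_eq_sub]
  obtain ⟨t, ht⟩ := sq_of_even ha
  obtain ⟨u, hu⟩ := sq_of_odd hb
  obtain ⟨v, hv⟩ := sq_of_odd hc
  obtain ⟨w, hw⟩ := sq_of_odd hd
  rw [ht, hu, hv, hw]
  clear ht hu hv hw
  obtain ⟨a, rfl⟩ : ∃ n, a = 2 * n := ⟨a / 2, by omega⟩
  obtain ⟨b, rfl⟩ : ∃ n, b = 2 * n + 1 := ⟨b / 2, by omega⟩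
  obtain ⟨c, rfl⟩ : ∃ n, c = 2 * n + 1 := ⟨c / 2, by omega⟩
  obtain ⟨d, rfl⟩ : ∃ n, d = 2 * n + 1 := ⟨d / 2, by omega⟩
  obtain ⟨x, hx⟩ := sq_of_odd (a := 2 * a * (2 * b + 1) - (2 * c + 1) * (2 * d + 1)) (by ring_nf; omega)
  rw [hx]
  ring_nf
  omega

lemma gaussForm_swap_right (a b c d : ℤ) : gaussForm a b c d = gaussForm a d c b := by
  unfold gaussForm; ring

lemma four_dvd_sq {a : ℤ} (ha : a % 2 = 0) : 4 ∣ a ^ 2 := by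
  obtain ⟨t, ht⟩ := sq_of_even ha
  omega

lemma kleinForm_dvd_of_two_odd {a b c d : ℤ} (ha : a % 2 = 1) (hb : b % 2 = 1)
    (hc : c % 2 = 0) (hd : d % 2 = 0) :
    64 ∣ kleinForm a b c d ∧ ((c + d) % 4 = 2 → 128 ∣ kleinForm a b c d) := by
  obtain ⟨a, rfl⟩ : ∃ n, a = 2 * n + 1 := ⟨a / 2, by omega⟩
  obtain ⟨b, rfl⟩ : ∃ n, b = 2 * n + 1 := ⟨b / 2, by omega⟩
  obtain ⟨c, rfl⟩ : ∃ n, c = 2 * n := ⟨c / 2, by omega⟩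
  obtain ⟨d, rfl⟩ : ∃ n, d = 2 * n := ⟨d / 2, by omega⟩
  have h : kleinForm (2 * a + 1) (2 * b + 1) (2 * c) (2 * d) =
      16 * (((a + b + 1) ^ 2 - (c + d) ^ 2) * ((a - b) ^ 2 - (c - d) ^ 2)) := by
    unfold kleinForm; ring
  have key : ∀ {m n : ℤ}, (m - n) % 2 = 0 →
      4 ∣ m ^ 2 - n ^ 2 ∧ (n % 2 = 1 → 8 ∣ m ^ 2 - n ^ 2) := by
    intro m n hmn
    rcases Int.emod_two_eq n with hn | hn
    · exact ⟨dvd_sub (four_dvd_sq (by omega)) (four_dvd_sq hn), by omega⟩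
    · obtain ⟨s, hs⟩ := sq_of_odd hn
      obtain ⟨t, ht⟩ := sq_of_odd (a := m) (by omega)
      omega
  rw [h, show (64 : ℤ) = 16 * 4 by rfl, show (128 : ℤ) = 16 * 8 by rfl]
  rcases Int.emod_two_eq (a - b - (c - d)) with hp | hp
  · obtain ⟨h4, h8⟩ := key hp
    exact ⟨mul_dvd_mul_left _ (h4.mul_left _),
      fun h2 => mul_dvd_mul_left _ ((h8 (by omega)).mul_left _)⟩
  · obtain ⟨h4, h8⟩ := key (m := a + b + 1) (n := c + d) (by omega)
    exact ⟨mul_dvd_mul_left _ (h4.mul_right _),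
      fun h2 => mul_dvd_mul_left _ ((h8 (by omega)).mul_right _)⟩

lemma gaussForm_dvd_of_opposite_odd {a b c d : ℤ} (ha : a % 2 = 1) (hb : b % 2 = 0)
    (hc : c % 2 = 1) (hd : d % 2 = 0) :
    32 ∣ gaussForm a b c d ∧ ((b + d) % 4 = 0 → 64 ∣ gaussForm a b c d) := by
  obtain ⟨a, rfl⟩ : ∃ n, a = 2 * n + 1 := ⟨a / 2, by omega⟩
  obtain ⟨b, rfl⟩ : ∃ n, b = 2 * n := ⟨b / 2, by omega⟩
  obtain ⟨c, rfl⟩ : ∃ n, c = 2 * n + 1 := ⟨c / 2, by omega⟩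
  obtain ⟨d, rfl⟩ : ∃ n, d = 2 * n := ⟨d / 2, by omega⟩
  have h : gaussForm (2 * a + 1) (2 * b) (2 * c + 1) (2 * d) =
      16 * (((a + c + 1) ^ 2 + (b + d) ^ 2) * ((a - c) ^ 2 + (b - d) ^ 2)) := by
    unfold gaussForm; ring
  have key : ∀ {m n : ℤ}, (m - n) % 2 = 0 →
      2 ∣ m ^ 2 + n ^ 2 ∧ (n % 2 = 0 → 4 ∣ m ^ 2 + n ^ 2) := by
    intro m n hmn
    rcases Int.emod_two_eq n with hn | hn
    · have h4 := dvd_add (four_dvd_sq (a := m) (by omega)) (four_dvd_sq hn)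
      exact ⟨by omega, fun _ => h4⟩
    · obtain ⟨s, hs⟩ := sq_of_odd hn
      obtain ⟨t, ht⟩ := sq_of_odd (a := m) (by omega)
      omega
  rw [h, show (32 : ℤ) = 16 * 2 by rfl, show (64 : ℤ) = 16 * 4 by rfl]
  rcases Int.emod_two_eq (a - c - (b - d)) with hp | hp
  · obtain ⟨h2, h4⟩ := key hp
    exact ⟨mul_dvd_mul_left _ (h2.mul_left _),
      fun h0 => mul_dvd_mul_left _ ((h4 (by omega)).mul_left _)⟩
  · obtain ⟨h2, h4⟩ := key (m := a + c + 1) (n := b + d) (by omega)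
    exact ⟨mul_dvd_mul_left _ (h2.mul_right _),
      fun h0 => mul_dvd_mul_left _ ((h4 (by omega)).mul_right _)⟩

lemma gaussForm_eq_four_mul_of_adjacent_odd {a b c d : ℤ} (ha : a % 2 = 1) (hb : b % 2 = 1)
    (hc : c % 2 = 0) (hd : d % 2 = 0) : ∃ u, gaussForm a b c d = 4 * u ∧
      u % 8 = (1 + 2 * (c + d)) % 8 ∧ (u % 8 = 5 → ∃ p ∈ Pset, p ∣ u) := by
  obtain ⟨s, hs⟩ := sq_of_odd ha
  obtain ⟨t, ht⟩ := sq_of_odd hb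
  obtain ⟨v, hv⟩ := sq_of_even hc
  obtain ⟨w, hw⟩ := sq_of_even hd
  refine ⟨(4 * s - 4 * t - 4 * v + 4 * w - c + d) ^ 2 + (a * b - c * d) ^ 2, ?_, ?_,
    exists_Pset_dvd_of_sq_add_sq rfl⟩
  · rw [gaussForm_eq_sq_add_sq, hs, ht, hv, hw]
    ring
  · obtain ⟨c, rfl⟩ : ∃ n, c = 2 * n := ⟨c / 2, by omega⟩
    obtain ⟨d, rfl⟩ : ∃ n, d = 2 * n := ⟨d / 2, by omega⟩
    obtain ⟨x, hx⟩ := sq_of_odd (a := a * b - 2 * c * (2 * d)) (by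
      obtain ⟨a, rfl⟩ : ∃ n, a = 2 * n + 1 := ⟨a / 2, by omega⟩
      obtain ⟨b, rfl⟩ : ∃ n, b = 2 * n + 1 := ⟨b / 2, by omega⟩
      ring_nf
      omega)
    obtain ⟨y, hy⟩ := sq_of_even
      (a := 4 * s - 4 * t - 4 * v + 4 * w - 2 * c + 2 * d) (by omega)
    rw [hx, hy]
    omega

lemma gaussForm_dvd_of_emod_two_eq {a b c d r : ℤ} (ha : a % 2 = r) (hb : b % 2 = r)
    (hc : c % 2 = r) (hd : d % 2 = r) : 16 ∣ gaussForm a b c d :=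
  mul_dvd_mul (a := 4) (c := 4)
    (dvd_add (four_dvd_sq (by omega)) (four_dvd_sq (by omega)))
    (dvd_add (four_dvd_sq (by omega)) (four_dvd_sq (by omega)))

lemma kleinForm_dvd_of_emod_two_eq {a b c d r : ℤ} (ha : a % 2 = r) (hb : b % 2 = r)
    (hc : c % 2 = r) (hd : d % 2 = r) : 16 ∣ kleinForm a b c d := by
  have key : ∀ {x : ℤ}, x % 2 = 0 → 2 ∣ x := fun hx => Int.dvd_of_emod_eq_zero hx
  exact mul_dvd_mul (mul_dvd_mul (mul_dvd_mul (a := 2) (c := 2) (key (by omega)) (key (by omega)))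
    (c := 2) (key (by omega))) (c := 2) (key (by omega))

/-- Translation by the elements of `C_2 × C_2`, acting on the coordinates of the blocks. -/
def kleinShift : Fin 4 → Fin 4 → Fin 4 :=
  ![![0, 1, 2, 3], ![1, 0, 3, 2], ![2, 3, 0, 1], ![3, 2, 1, 0]]

lemma blockDet_kleinShift (e g h k : Fin 4 → ℤ) (i : Fin 4) :
    blockDet (e ∘ kleinShift i) (g ∘ kleinShift i) (h ∘ kleinShift i) (k ∘ kleinShift i) =
      blockDet e g h k := by
  unfold blockDet
  congr 1
  · congr 1
    · congr 1
      · fin_cases i <;> simp [kleinShift, kleinForm] <;> ring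
      · fin_cases i <;> simp [kleinShift, gaussForm] <;> ring
    · fin_cases i <;> simp [kleinShift, gaussForm] <;> ring
  · fin_cases i <;> simp [kleinShift, gaussForm] <;> ring

lemma prod_mod_sixteen {a b x y z w E G H K : ℤ} (ha : a % 2 = 1) (hb : b % 2 = 1)
    (hE : E % 16 = (a + 4 * x) % 16) (hG : G % 16 = (b + 4 * y) % 16)
    (hH : H % 16 = (b + 4 * z) % 16) (hK : K % 16 = (b + 4 * w) % 16)
    (hx : x % 2 = 0) (hy : y % 2 = 0) (hz : z % 2 = 0) (hsum : (x + y + z + w) % 4 = 0) :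
    E * G * H * K % 16 = a * b ^ 3 % 16 := by
  obtain ⟨x, rfl⟩ := Int.dvd_of_emod_eq_zero hx
  obtain ⟨y, rfl⟩ := Int.dvd_of_emod_eq_zero hy
  obtain ⟨z, rfl⟩ := Int.dvd_of_emod_eq_zero hz
  obtain ⟨t, rfl⟩ : ∃ t, w = 2 * (2 * t - x - y - z) := ⟨(2 * (x + y + z) + w) / 4, by omega⟩
  obtain ⟨c, rfl⟩ : ∃ c, a = 2 * c + 1 := ⟨a / 2, by omega⟩
  obtain ⟨d, rfl⟩ : ∃ d, b = 2 * d + 1 := ⟨b / 2, by omega⟩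
  refine (((Int.ModEq.mul hE hG).mul hH).mul hK).trans (Int.modEq_iff_dvd.2 ?_)
  generalize hv : 2 * t - x - y - z = v
  refine ⟨-((2 * d + 1) ^ 2 * (x * (d - c) + (2 * c + 1) * t) +
    4 * ((2 * c + 1) * (2 * d + 1) * (y * z + y * v + z * v) +
      (2 * d + 1) ^ 2 * x * (y + z + v) + 8 * ((2 * c + 1) * (y * z * v) +
      (2 * d + 1) * x * (y * z + y * v + z * v)) + 64 * x * y * z * v)), ?_⟩
  rw [← hv]
  ring

section Compatible

variable {e g h k : Fin 4 → ℤ}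

lemma Compatible.emod (hc : Compatible e g h k) (i : Fin 4) :
    g i % 2 = e i % 2 ∧ h i % 2 = e i % 2 ∧ k i % 2 = e i % 2 ∧
      (e i + g i + h i + k i) % 4 = 0 := by
  have := hc i
  simp only [Int.ModEq] at this
  omega

lemma blockDet_mod_of_one_odd (hc : Compatible e g h k) (h0 : e 0 % 2 = 1) (h1 : e 1 % 2 = 0)
    (h2 : e 2 % 2 = 0) (h3 : e 3 % 2 = 0) : blockDet e g h k % 16 = 1 := by
  have c0 := hc.emod 0
  have c1 := hc.emod 1
  have c2 := hc.emod 2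
  have c3 := hc.emod 3
  have hE := kleinForm_mod_of_one_odd h0 h1 h2 h3
  have hG := gaussForm_mod_of_one_odd (a := g 0) (b := g 1) (c := g 2) (d := g 3)
    (by omega) (by omega) (by omega) (by omega)
  have hH := gaussForm_mod_of_one_odd (a := h 0) (b := h 2) (c := h 1) (d := h 3)
    (by omega) (by omega) (by omega) (by omega)
  have hK := gaussForm_mod_of_one_odd (a := k 0) (b := k 1) (c := -k 3) (d := k 2)
    (by omega) (by omega) (by omega) (by omega)
  exact prod_mod_sixteen rfl rfl hE hG hH hK (by omega) (by omega) (by omega) (by omega)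

lemma blockDet_of_three_odd (hc : Compatible e g h k) (h0 : e 0 % 2 = 0) (h1 : e 1 % 2 = 1)
    (h2 : e 2 % 2 = 1) (h3 : e 3 % 2 = 1) : blockDet e g h k ∈ Aset := by
  have c0 := hc.emod 0
  have c1 := hc.emod 1
  have c2 := hc.emod 2
  have c3 := hc.emod 3
  have hE := kleinForm_mod_of_three_odd h0 h1 h2 h3
  have hG := gaussForm_mod_of_three_odd (a := g 0) (b := g 1) (c := g 2) (d := g 3)
    (by omega) (by omega) (by omega) (by omega)
  have hH := gaussForm_mod_of_three_odd (a := h 0) (b := h 2) (c := h 1) (d := h 3)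
    (by omega) (by omega) (by omega) (by omega)
  have hK := gaussForm_mod_of_three_odd (a := k 0) (b := k 1) (c := -k 3) (d := k 2)
    (by omega) (by omega) (by omega) (by omega)
  obtain ⟨p, hp, G', hG'⟩ := exists_Pset_dvd_of_sq_add_sq
    (gaussForm_eq_sq_add_sq (g 0) (g 1) (g 2) (g 3)) (by omega)
  obtain ⟨q, hq, H', hH'⟩ := exists_Pset_dvd_of_sq_add_sq
    (gaussForm_eq_sq_add_sq (h 0) (h 2) (h 1) (h 3)) (by omega)
  obtain ⟨r, hr, K', hK'⟩ := exists_Pset_dvd_of_sq_add_sq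
    (gaussForm_eq_sq_add_sq (k 0) (k 1) (-k 3) (k 2)) (by omega)
  refine mem_Aset_iff.2 ⟨?_, kleinForm (e 0) (e 1) (e 2) (e 3) * G' * H' * K',
    p, hp, q, hq, r, hr, ?_⟩
  · exact prod_mod_sixteen rfl rfl hE hG hH hK (by omega) (by omega) (by omega) (by omega)
  · unfold blockDet
    rw [hG', hH', hK']
    ring

/-- The values of the determinant that are divisible by `2 ^ 15`. -/
def IsEvenValue (x : ℤ) : Prop :=
  2 ^ 15 ∣ x ∧ (2 ^ 16 ∣ x ∨ ∃ p ∈ Pset, p ∣ x)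

lemma isEvenValue_of_factors {E F U V s t u v : ℤ}
    (hE : 64 ∣ E ∧ (s % 4 = 2 → 128 ∣ E)) (hF : 32 ∣ F ∧ (t % 4 = 0 → 64 ∣ F))
    (hU : ∃ w, U = 4 * w ∧ w % 8 = (1 + 2 * u) % 8 ∧ (w % 8 = 5 → ∃ p ∈ Pset, p ∣ w))
    (hV : ∃ w, V = 4 * w ∧ w % 8 = (1 + 2 * v) % 8 ∧ (w % 8 = 5 → ∃ p ∈ Pset, p ∣ w))
    (hs : s % 2 = 0) (ht : t % 2 = 0) (hu : u % 2 = 0) (hv : v % 2 = 0)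
    (hsum : (s + t + u + v) % 4 = 0) : IsEvenValue (E * F * (U * V)) := by
  obtain ⟨w, rfl, hw, hwp⟩ := hU
  obtain ⟨z, rfl, hz, hzp⟩ := hV
  have h16 : (16 : ℤ) ∣ 4 * w * (4 * z) := ⟨w * z, by ring⟩
  refine ⟨mul_dvd_mul (mul_dvd_mul hE.1 hF.1) h16, ?_⟩
  by_cases hs2 : s % 4 = 2
  · exact Or.inl (mul_dvd_mul (mul_dvd_mul (hE.2 hs2) hF.1) h16)
  by_cases ht0 : t % 4 = 0
  · exact Or.inl (mul_dvd_mul (mul_dvd_mul hE.1 (hF.2 ht0)) h16)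
  right
  rcases (by omega : w % 8 = 5 ∨ z % 8 = 5) with h5 | h5
  · obtain ⟨p, hp, c, rfl⟩ := hwp h5
    exact ⟨p, hp, E * F * (4 * c * (4 * z)), by ring⟩
  · obtain ⟨p, hp, c, rfl⟩ := hzp h5
    exact ⟨p, hp, E * F * (4 * w * (4 * c)), by ring⟩

lemma isEvenValue_blockDet_of_two_odd (hc : Compatible e g h k) (h0 : e 0 % 2 = 1)
    (hodd : (e 1 % 2 = 1 ∧ e 2 % 2 = 0 ∧ e 3 % 2 = 0) ∨
      (e 1 % 2 = 0 ∧ e 2 % 2 = 1 ∧ e 3 % 2 = 0) ∨ (e 1 % 2 = 0 ∧ e 2 % 2 = 0 ∧ e 3 % 2 = 1)) :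
    IsEvenValue (blockDet e g h k) := by
  have c0 := hc.emod 0
  have c1 := hc.emod 1
  have c2 := hc.emod 2
  have c3 := hc.emod 3
  unfold blockDet
  rcases hodd with ⟨h1, h2, h3⟩ | ⟨h1, h2, h3⟩ | ⟨h1, h2, h3⟩
  · have hE := kleinForm_dvd_of_two_odd h0 h1 h2 h3
    have hG := gaussForm_eq_four_mul_of_adjacent_odd (a := g 0) (b := g 1) (c := g 2) (d := g 3)
      (by omega) (by omega) (by omega) (by omega)
    have hH := gaussForm_dvd_of_opposite_odd (a := h 0) (b := h 2) (c := h 1) (d := h 3)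
      (by omega) (by omega) (by omega) (by omega)
    have hK := gaussForm_eq_four_mul_of_adjacent_odd (a := k 0) (b := k 1) (c := -k 3) (d := k 2)
      (by omega) (by omega) (by omega) (by omega)
    convert isEvenValue_of_factors hE hH hG hK (by omega) (by omega) (by omega) (by omega)
      (by omega) using 1
    ring
  · have hE := kleinForm_dvd_of_two_odd h0 h2 h1 h3
    have hG := gaussForm_dvd_of_opposite_odd (a := g 0) (b := g 1) (c := g 2) (d := g 3)
      (by omega) (by omega) (by omega) (by omega)
    have hH := gaussForm_eq_four_mul_of_adjacent_odd (a := h 0) (b := h 2) (c := h 1) (d := h 3)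
      (by omega) (by omega) (by omega) (by omega)
    have hK := gaussForm_eq_four_mul_of_adjacent_odd (a := k 0) (b := k 2) (c := -k 3) (d := k 1)
      (by omega) (by omega) (by omega) (by omega)
    have hcomm : kleinForm (e 0) (e 1) (e 2) (e 3) = kleinForm (e 0) (e 2) (e 1) (e 3) := by
      unfold kleinForm; ring
    rw [hcomm, gaussForm_swap_right (k 0)]
    convert isEvenValue_of_factors hE hG hH hK (by omega) (by omega) (by omega) (by omega)
      (by omega) using 1
    ring
  · have hE := kleinForm_dvd_of_two_odd h0 h3 h1 h2
    have hG := gaussForm_eq_four_mul_of_adjacent_odd (a := g 0) (b := g 3) (c := g 2) (d := g 1)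
      (by omega) (by omega) (by omega) (by omega)
    have hH := gaussForm_eq_four_mul_of_adjacent_odd (a := h 0) (b := h 3) (c := h 1) (d := h 2)
      (by omega) (by omega) (by omega) (by omega)
    have hK := gaussForm_dvd_of_opposite_odd (a := k 0) (b := k 1) (c := -k 3) (d := k 2)
      (by omega) (by omega) (by omega) (by omega)
    have hcomm : kleinForm (e 0) (e 1) (e 2) (e 3) = kleinForm (e 0) (e 3) (e 1) (e 2) := by
      unfold kleinForm; ring
    rw [hcomm, gaussForm_swap_right (g 0), gaussForm_swap_right (h 0)]
    convert isEvenValue_of_factors hE hK hG hH (by omega) (by omega) (by omega) (by omega)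
      (by omega) using 1
    ring

lemma isEvenValue_blockDet_of_const {r : ℤ} (hc : Compatible e g h k) (hr : ∀ i, e i % 2 = r) :
    IsEvenValue (blockDet e g h k) := by
  have hg (i : Fin 4) : g i % 2 = r := (hc.emod i).1.trans (hr i)
  have hh (i : Fin 4) : h i % 2 = r := (hc.emod i).2.1.trans (hr i)
  have hk (i : Fin 4) : k i % 2 = r := (hc.emod i).2.2.1.trans (hr i)
  have h16 : (2 : ℤ) ^ 16 ∣ blockDet e g h k := by
    rw [show (2 : ℤ) ^ 16 = 16 * 16 * 16 * 16 by norm_num]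
    exact mul_dvd_mul (mul_dvd_mul (mul_dvd_mul
      (kleinForm_dvd_of_emod_two_eq (hr _) (hr _) (hr _) (hr _))
      (gaussForm_dvd_of_emod_two_eq (hg _) (hg _) (hg _) (hg _)))
      (gaussForm_dvd_of_emod_two_eq (hh _) (hh _) (hh _) (hh _)))
      (gaussForm_dvd_of_emod_two_eq (hk _) (hk _) (by rw [Int.neg_emod_two, hk]) (hk _))
  exact ⟨(pow_dvd_pow 2 (by norm_num)).trans h16, Or.inl h16⟩

lemma blockDet_trichotomy (hc : Compatible e g h k) : blockDet e g h k % 16 = 1 ∨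
    blockDet e g h k ∈ Aset ∨ IsEvenValue (blockDet e g h k) := by
  have hshift (i : Fin 4) : Compatible (e ∘ kleinShift i) (g ∘ kleinShift i) (h ∘ kleinShift i)
    (k ∘ kleinShift i) := fun j => hc (kleinShift i j)
  have one (i : Fin 4) := blockDet_mod_of_one_odd (hshift i)
  have two (i : Fin 4) := isEvenValue_blockDet_of_two_odd (hshift i)
  have three (i : Fin 4) := blockDet_of_three_odd (hshift i)
  have const (r : ℤ) := isEvenValue_blockDet_of_const (r := r) hc
  simp only [blockDet_kleinShift] at one two three
  simp [Fin.forall_fin_succ, kleinShift] at one two three const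
  rcases Int.emod_two_eq_zero_or_one (e 0) with h0 | h0 <;>
  rcases Int.emod_two_eq_zero_or_one (e 1) with h1 | h1 <;>
  rcases Int.emod_two_eq_zero_or_one (e 2) with h2 | h2 <;>
  rcases Int.emod_two_eq_zero_or_one (e 3) with h3 | h3 <;>
  simp only [h0, h1, h2, h3] at one two three const <;> simp_all

end Compatible

lemma IsEvenValue.cases {x : ℤ} (hx : IsEvenValue x) :
    (∃ p ∈ Pset, ∃ m, x = 2 ^ 15 * p * (2 * m + 1)) ∨ ∃ m, x = 2 ^ 16 * m := by
  obtain ⟨⟨y, rfl⟩, h16 | ⟨p, hp, hpx⟩⟩ := hx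
  · exact Or.inr h16
  have hp8 : p ≡ -3 [ZMOD 8] := hp.2.2
  obtain ⟨c, hc⟩ : ∃ c, p = 2 * c + 1 := ⟨p / 2, by simp only [Int.ModEq] at hp8; omega⟩
  have hcop : IsCoprime p (2 ^ 15) := IsCoprime.pow_right ⟨1, -c, by rw [hc]; ring⟩
  obtain ⟨z, rfl⟩ := hcop.dvd_of_dvd_mul_left hpx
  obtain ⟨m, rfl | rfl⟩ := Int.even_or_odd' z
  · exact Or.inr ⟨p * m, by ring⟩
  · exact Or.inl ⟨p, hp, m, by ring⟩

theorem stmt0 :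
    S44 = {x : ℤ | ∃ m : ℤ, x = 16 * m + 1} ∪
          {x : ℤ | ∃ p ∈ Pset, ∃ m : ℤ, x = 2 ^ 15 * p * (2 * m + 1)} ∪
          {x : ℤ | ∃ m : ℤ, x = 2 ^ 16 * m} ∪ Aset := by
  ext x
  constructor
  · intro hx
    obtain ⟨e, g, h, k, hc, rfl⟩ := mem_S44_iff.1 hx
    rcases blockDet_trichotomy hc with h1 | hA | hev
    · exact Or.inl (Or.inl (Or.inl ⟨blockDet e g h k / 16, by omega⟩))
    · exact Or.inr hA
    · rcases hev.cases with h15 | h16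
      · exact Or.inl (Or.inl (Or.inr h15))
      · exact Or.inl (Or.inr h16)
  · rintro (((⟨m, rfl⟩ | ⟨p, hp, m, rfl⟩) | ⟨m, rfl⟩) | hA)
    · exact sixteen_mul_add_one_mem m
    · exact two_pow_fifteen_mul_mem hp m
    · exact two_pow_sixteen_mul_mem m
    · obtain ⟨h9, c, p, hp, q, hq, r, hr, rfl⟩ := mem_Aset_iff.1 hA
      exact mul_mem_of_mod_sixteen hp hq hr h9
end

section
/- With the notation below, the five integers D_{4×4}(a), D_4(b_0,b_1,b_2,b_3), D_4(c_0,c_1,c_2,c_3), ββ̄, and γγ̄ are all congruent to one another modulo 2. -/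
open Matrix Complex

def D4 (x0 x1 x2 x3 : ℤ) : ℤ :=
  (Matrix.of ![![x0, x1, x2, x3], ![x3, x0, x1, x2], ![x2, x3, x0, x1], ![x1, x2, x3, x0]]).det

def bI (a : ℕ → ℤ) (i : ℕ) : ℤ := (a i + a (i + 8)) + (a (i + 4) + a (i + 12))

def cI (a : ℕ → ℤ) (i : ℕ) : ℤ := (a i + a (i + 8)) - (a (i + 4) + a (i + 12))

def dd (a : ℕ → ℤ) (i : ℕ) : ℤ := a i - a (i + 8)

noncomputable def alphaD (d : ℕ → ℤ) (i : ℕ) : ℂ := (d i : ℂ) + Complex.I * (d (i + 4) : ℂ)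

noncomputable def betaD (d : ℕ → ℤ) : ℂ :=
  (alphaD d 0 + alphaD d 2) ^ 2 - (alphaD d 1 + alphaD d 3) ^ 2

noncomputable def gammaD (d : ℕ → ℤ) : ℂ :=
  (alphaD d 0 - alphaD d 2) ^ 2 + (alphaD d 1 - alphaD d 3) ^ 2

/-- In characteristic `p`, the group matrix of an abelian `p`-group has determinant equal to the
sum of its variables. -/
theorem det_circulant_eq_sum {p n : ℕ} [Fact p.Prime] {G : Type*} [AddCommGroup G] [Fintype G]
    [DecidableEq G] (hG : Fintype.card G = p ^ n) (v : G → ZMod p) :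
    (Matrix.circulant v).det = ∑ g, v g := by
  let b : Module.Basis G (ZMod p) (AddMonoidAlgebra (ZMod p) G) :=
    AddMonoidAlgebra.basis G (ZMod p)
  let x : AddMonoidAlgebra (ZMod p) G := ∑ g, AddMonoidAlgebra.single g (v g)
  have hM : Algebra.leftMulMatrix b x = Matrix.circulant v := by
    ext g h
    have hrepr (k : G) (r : ZMod p) :
        b.repr (AddMonoidAlgebra.single k r) g = if k = g then r else 0 :=
      Finsupp.single_apply
    simp [Algebra.leftMulMatrix_eq_repr_mul, hrepr, show b h = AddMonoidAlgebra.single h 1 from rfl,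
      x, Finset.sum_mul, Matrix.circulant_apply, ← eq_sub_iff_add_eq]
  have hx : x ^ p ^ n = (∑ g, v g) • (1 : AddMonoidAlgebra (ZMod p) G) := by
    have : CharP (AddMonoidAlgebra (ZMod p) G) p := charP_of_injective_algebraMap
      (algebraMap (ZMod p) (AddMonoidAlgebra (ZMod p) G)).injective p
    have : ExpChar (AddMonoidAlgebra (ZMod p) G) p := .prime Fact.out
    have hcard (g : G) : p ^ n • g = 0 := by rw [← hG, card_nsmul_eq_zero]
    simp only [x, sum_pow_char_pow, AddMonoidAlgebra.single_pow, ZMod.pow_card_pow, hcard,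
      Finset.sum_smul, AddMonoidAlgebra.one_def, AddMonoidAlgebra.smul_single, smul_eq_mul, mul_one]
  have hdet := congrArg (fun y => (Algebra.leftMulMatrix b y).det) hx
  simpa [hM, map_pow, map_smul, Matrix.det_smul, hG, ZMod.pow_card_pow] using hdet

theorem Int.det_circulant_modEq_sum {p n : ℕ} [Fact p.Prime] {G : Type*} [AddCommGroup G]
    [Fintype G] [DecidableEq G] (hG : Fintype.card G = p ^ n) (v : G → ℤ) :
    (Matrix.circulant v).det ≡ ∑ g, v g [ZMOD p] := by
  rw [← ZMod.intCast_eq_intCast_iff, Int.cast_det, Int.cast_sum, ← det_circulant_eq_sum hG]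
  rfl

theorem D4_modEq_sum (x0 x1 x2 x3 : ℤ) : D4 x0 x1 x2 x3 ≡ x0 + x1 + x2 + x3 [ZMOD 2] := by
  have h := Int.det_circulant_modEq_sum (p := 2) (n := 2) (G := Fin 4) (by simp) ![x0, x1, x2, x3]
  rw [← Matrix.det_transpose, Fin.sum_univ_four] at h
  have hM : (Matrix.circulant ![x0, x1, x2, x3])ᵀ = Matrix.of
      ![![x0, x1, x2, x3], ![x3, x0, x1, x2], ![x2, x3, x0, x1], ![x1, x2, x3, x0]] := by
    ext i j
    fin_cases i <;> fin_cases j <;> rfl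
  rw [hM] at h
  exact h

/-- Parity of the squared modulus of a complex number `(u + iv)² - (w + iz)²`. -/
theorem modEq_sum_of_eq_mul_conj {B u v w z : ℤ}
    (h : (B : ℂ) = ((u + I * v) ^ 2 - (w + I * z) ^ 2) *
      (starRingEnd ℂ) ((u + I * v) ^ 2 - (w + I * z) ^ 2)) :
    B ≡ u + v + w + z [ZMOD 2] := by
  have hB : B = (u ^ 2 - v ^ 2 - w ^ 2 + z ^ 2) ^ 2 + 4 * (u * v - w * z) ^ 2 := by
    simp only [map_sub, map_pow, map_add, map_mul, conj_I, map_intCast] at h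
    have hI : I ^ 2 = -1 := I_sq
    have : (B : ℂ) =
        ((u ^ 2 - v ^ 2 - w ^ 2 + z ^ 2) ^ 2 + 4 * (u * v - w * z) ^ 2 : ℤ) := by
      push_cast
      rw [h]
      grind
    exact_mod_cast this
  rw [hB]
  refine (ZMod.intCast_eq_intCast_iff _ _ 2).1 ?_
  push_cast
  generalize (u : ZMod 2) = u
  generalize (v : ZMod 2) = v
  generalize (w : ZMod 2) = w
  generalize (z : ZMod 2) = z
  decide +revert

theorem stmt4 (a : ℕ → ℤ) (B G : ℤ)
    (hB : (B : ℂ) = betaD (dd a) * (starRingEnd ℂ) (betaD (dd a)))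
    (hG : (G : ℂ) = gammaD (dd a) * (starRingEnd ℂ) (gammaD (dd a))) :
    Matrix.det (Matrix.of fun g h : ZMod 4 × ZMod 4 =>
        a ((g - h).1.val + 4 * (g - h).2.val)) ≡
      D4 (bI a 0) (bI a 1) (bI a 2) (bI a 3) [ZMOD 2] ∧
    D4 (bI a 0) (bI a 1) (bI a 2) (bI a 3) ≡ D4 (cI a 0) (cI a 1) (cI a 2) (cI a 3) [ZMOD 2] ∧
    D4 (cI a 0) (cI a 1) (cI a 2) (cI a 3) ≡ B [ZMOD 2] ∧
    B ≡ G [ZMOD 2] := by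
  have hA := Int.det_circulant_modEq_sum (p := 2) (n := 4) (G := ZMod 4 × ZMod 4) (by simp)
    fun g => a (g.1.val + 4 * g.2.val)
  have hb := D4_modEq_sum (bI a 0) (bI a 1) (bI a 2) (bI a 3)
  have hc := D4_modEq_sum (cI a 0) (cI a 1) (cI a 2) (cI a 3)
  have hβ := modEq_sum_of_eq_mul_conj (B := B) (u := dd a 0 + dd a 2) (v := dd a 4 + dd a 6)
    (w := dd a 1 + dd a 3) (z := dd a 5 + dd a 7) (by
      have h : betaD (dd a) = (((dd a 0 + dd a 2 : ℤ) : ℂ) + I * (dd a 4 + dd a 6 : ℤ)) ^ 2 -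
          (((dd a 1 + dd a 3 : ℤ) : ℂ) + I * (dd a 5 + dd a 7 : ℤ)) ^ 2 := by
        simp only [betaD, alphaD]
        push_cast
        ring
      rw [← h, hB])
  have hγ := modEq_sum_of_eq_mul_conj (B := G) (u := dd a 0 - dd a 2) (v := dd a 4 - dd a 6)
    (w := dd a 5 - dd a 7) (z := dd a 3 - dd a 1) (by
      have h : gammaD (dd a) = (((dd a 0 - dd a 2 : ℤ) : ℂ) + I * (dd a 4 - dd a 6 : ℤ)) ^ 2 -
          (((dd a 5 - dd a 7 : ℤ) : ℂ) + I * (dd a 3 - dd a 1 : ℤ)) ^ 2 := by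
        have hI : I ^ 2 = -1 := I_sq
        simp only [gammaD, alphaD]
        push_cast
        grind
      rw [← h, hG])
  have hS : ∑ g : ZMod 4 × ZMod 4, a (g.1.val + 4 * g.2.val) = ∑ i ∈ Finset.range 16, a i := by
    simp only [Fintype.sum_prod_type]
    change ∑ r : Fin 4, ∑ s : Fin 4, a (r.val + 4 * s.val) = _
    simp only [Fin.sum_univ_four, Finset.sum_range_succ, Finset.sum_range_zero]
    norm_num
    ring
  rw [hS] at hA
  simp only [Finset.sum_range_succ, Finset.sum_range_zero] at hA
  change Matrix.det (Matrix.of fun g h : ZMod 4 × ZMod 4 =>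
    a ((g - h).1.val + 4 * (g - h).2.val)) ≡ _ [ZMOD 2] at hA
  simp only [bI, cI, dd, Int.ModEq, Nat.reduceAdd] at *
  omega
end

section
/- Every odd integer belonging to S(C_4^2) lies in { 16m+1 : m ∈ ℤ } ∪ A, where A is the set of integers of the form (8j+1)(8k−3)(8l−3)(8m−3)(8n−3) with j,k ∈ ℤ, the numbers 8l−3, 8m−3, 8n−3 primes in P, and j ≢ k+l+m+n (mod 2). -/
open Matrix Complex

/-- A natural number all of whose prime factors are `1` mod `8` is itself `1` mod `8`. -/
theorem mod_eight_eq_one_of_primes {b : ℕ} (hb : b ≠ 0)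
    (h : ∀ p, p.Prime → p ∣ b → p % 8 = 1) : b % 8 = 1 := by
  induction b using Nat.recOnMul with
  | zero => exact absurd rfl hb
  | one => rfl
  | prime p hp => exact h p hp dvd_rfl
  | mul m n hm hn =>
    have h1 := hm (left_ne_zero_of_mul hb) fun p hp hd => h p hp (hd.mul_right n)
    have h2 := hn (right_ne_zero_of_mul hb) fun p hp hd => h p hp (hd.mul_left m)
    rw [Nat.mul_mod, h1, h2]

/-- A sum of two squares that is `5` mod `8` has a prime factor that is `5` mod `8`. -/
theorem exists_mem_Pset_dvd {u v : ℤ} (h : (u ^ 2 + v ^ 2) % 8 = 5) :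
    ∃ p ∈ Pset, p ∣ u ^ 2 + v ^ 2 := by
  obtain ⟨a, b, hab, hsq⟩ := Nat.eq_sq_add_sq_iff_eq_sq_mul.mp
    ⟨u.natAbs, v.natAbs, rfl⟩
  have hcast : u ^ 2 + v ^ 2 = (a : ℤ) ^ 2 * b := by
    have := congrArg (Nat.cast : ℕ → ℤ) hab
    push_cast at this
    simpa using this
  have hmod : (a ^ 2 * b) % 8 = 5 := by
    rw [hcast] at h
    exact_mod_cast h
  have hb8 : b % 8 = 5 := by
    have ha : a % 8 < 8 := Nat.mod_lt _ (by norm_num)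
    have hb : b % 8 < 8 := Nat.mod_lt _ (by norm_num)
    rw [Nat.mul_mod, Nat.pow_mod] at hmod
    generalize a % 8 = a' at *
    generalize b % 8 = b' at *
    interval_cases a' <;> omega
  obtain ⟨p, hp, hpb, hp8⟩ : ∃ p, p.Prime ∧ p ∣ b ∧ p % 8 ≠ 1 := by
    by_contra! hcon
    have := mod_eight_eq_one_of_primes (by omega) hcon
    omega
  have h3 : p % 4 ≠ 3 := by
    have := Fact.mk hp
    exact ZMod.exists_sq_eq_neg_one_iff.mp (ZMod.isSquare_neg_one_of_dvd hpb hsq)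
  have h2 : p % 2 = 1 := by
    have : b % 2 = 1 := by omega
    exact Nat.odd_iff.mp ((Nat.odd_iff.mpr this).of_dvd_nat hpb)
  refine ⟨p, ⟨Nat.prime_iff_prime_int.mp hp, by exact_mod_cast hp.pos, ?_⟩, ?_⟩
  · unfold Int.ModEq
    omega
  · rw [hcast]
    exact (Int.natCast_dvd_natCast.mpr hpb).mul_left _

theorem sq_add_sq_mod_four {u v : ℤ} (h : (u + v) % 2 = 1) : (u ^ 2 + v ^ 2) % 4 = 1 := by
  rcases Int.even_or_odd' u with ⟨c, rfl | rfl⟩ <;> rcases Int.even_or_odd' v with ⟨d, rfl | rfl⟩ <;>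
    ring_nf at h ⊢ <;> omega

/-- Two integers that are `1` mod `4` multiply, mod `16`, to the square of their mean whenever
that mean is `1` mod `4`. -/
theorem mul_mod_sixteen {M N T : ℤ} (hM : M % 4 = 1) (hMN : M + N = 2 * T)
    (hT : T % 4 = 1) : (M * N) % 16 = (2 * T - 1) % 16 := by
  obtain ⟨m, rfl⟩ : ∃ m, M = 4 * m + 1 := ⟨M / 4, by omega⟩
  obtain ⟨t, rfl⟩ : ∃ t, T = 4 * t + 1 := ⟨T / 4, by omega⟩
  obtain rfl : N = 4 * (2 * t - m) + 1 := by linarith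
  have : (4 * m + 1) * (4 * (2 * t - m) + 1)
      = 2 * (4 * t + 1) - 1 + 16 * (2 * m * t - m ^ 2) := by ring
  rw [this]
  omega

theorem pow_four_mod_sixteen (x : ℤ) : x ^ 4 % 16 = x % 2 := by
  rcases Int.even_or_odd' x with ⟨c, rfl | rfl⟩
  · ring_nf; omega
  · have h : (2 * c + 1) ^ 4 = 1 + 8 * (c * (c + 1)) + 16 * (c ^ 4 + 2 * c ^ 3 + c ^ 2) := by ring
    have := (Int.even_mul_succ_self c).two_dvd
    omega

theorem sq_mod_four (x : ℤ) : x ^ 2 % 4 = x % 2 := by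
  rcases Int.even_or_odd' x with ⟨c, rfl | rfl⟩ <;> ring_nf <;> omega

theorem sum_sq_mod_four {x y z w : ℤ} (h : (x + y + z + w) % 2 = 1) :
    (x ^ 2 + y ^ 2 + z ^ 2 + w ^ 2) % 4 = 1 ∨ (x ^ 2 + y ^ 2 + z ^ 2 + w ^ 2) % 4 = 3 := by
  have hx2 := sq_mod_four x
  have hy2 := sq_mod_four y
  have hz2 := sq_mod_four z
  have hw2 := sq_mod_four w
  omega

/-- The Klein four-group determinant, mod `16`, in the variables `x, y, z, w`. -/
theorem klein_mod {x y z w : ℤ} (h : (x + y + z + w) % 2 = 1) :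
    ((x ^ 2 + y ^ 2 + z ^ 2 + w ^ 2) % 4 = 1 →
      ((x + y + z + w) * (x + y - z - w) * (x - y + z - w) * (x - y - z + w)) % 16
        = (2 * (x ^ 2 + y ^ 2 + z ^ 2 + w ^ 2) - 1) % 16) ∧
    ((x ^ 2 + y ^ 2 + z ^ 2 + w ^ 2) % 4 = 3 →
      ((x + y + z + w) * (x + y - z - w) * (x - y + z - w) * (x - y - z + w)) % 8 = 5) := by
  have key : (x + y + z + w) * (x + y - z - w) * (x - y + z - w) * (x - y - z + w)
      = 2 * (x ^ 4 + y ^ 4 + z ^ 4 + w ^ 4) - (x ^ 2 + y ^ 2 + z ^ 2 + w ^ 2) ^ 2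
        + 8 * (x * y * z * w) := by ring
  have heven : x * y * z * w % 2 = 0 := by
    rcases Int.emod_two_eq_zero_or_one x with hx | hx <;>
    rcases Int.emod_two_eq_zero_or_one y with hy | hy <;>
    rcases Int.emod_two_eq_zero_or_one z with hz | hz <;>
    rcases Int.emod_two_eq_zero_or_one w with hw | hw <;>
    first
    | omega
    | simp [Int.mul_emod, hx, hy, hz, hw]
  have hx4 := pow_four_mod_sixteen x
  have hy4 := pow_four_mod_sixteen y
  have hz4 := pow_four_mod_sixteen z
  have hw4 := pow_four_mod_sixteen w
  have hx2 := sq_mod_four x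
  have hy2 := sq_mod_four y
  have hz2 := sq_mod_four z
  have hw2 := sq_mod_four w
  rw [key]
  generalize x * y * z * w = v at *
  generalize hT : x ^ 2 + y ^ 2 + z ^ 2 + w ^ 2 = T at *
  constructor
  · intro h1
    obtain ⟨t, rfl⟩ : ∃ t, T = 4 * t + 1 := ⟨T / 4, by omega⟩
    have : (4 * t + 1) ^ 2 = 16 * t ^ 2 + 8 * t + 1 := by ring
    omega
  · intro h1
    obtain ⟨t, rfl⟩ : ∃ t, T = 4 * t + 3 := ⟨T / 4, by omega⟩
    have : (4 * t + 3) ^ 2 = 16 * t ^ 2 + 24 * t + 9 := by ring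
    omega

/-- If two odd sums of two squares have mean `3` mod `4`, then one of them is `5` mod `8`, which
gives a prime factor of the product. -/
theorem exists_mem_Pset_dvd_mul {u v u' v' T : ℤ} (h : (u + v) % 2 = 1) (h' : (u' + v') % 2 = 1)
    (hT : u ^ 2 + v ^ 2 + (u' ^ 2 + v' ^ 2) = 2 * T) (hT3 : T % 4 = 3) :
    (∃ p ∈ Pset, p ∣ (u ^ 2 + v ^ 2) * (u' ^ 2 + v' ^ 2)) ∧
      (u ^ 2 + v ^ 2) * (u' ^ 2 + v' ^ 2) % 8 = 5 := by
  have h1 := sq_add_sq_mod_four h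
  have h2 := sq_add_sq_mod_four h'
  obtain ⟨h5, h5'⟩ | ⟨h5, h5'⟩ :
      (u ^ 2 + v ^ 2) % 8 = 5 ∧ (u' ^ 2 + v' ^ 2) % 8 = 1 ∨
        (u ^ 2 + v ^ 2) % 8 = 1 ∧ (u' ^ 2 + v' ^ 2) % 8 = 5 := by omega
  · obtain ⟨p, hp, hd⟩ := exists_mem_Pset_dvd h5
    exact ⟨⟨p, hp, hd.mul_right _⟩, by rw [Int.mul_emod, h5, h5']; rfl⟩
  · obtain ⟨p, hp, hd⟩ := exists_mem_Pset_dvd h5'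
    exact ⟨⟨p, hp, hd.mul_left _⟩, by rw [Int.mul_emod, h5, h5']; rfl⟩

theorem mul_four_mod_sixteen {X Y Z W A B C D : ℤ} (hA : A % 4 = 1) (hB : B % 4 = 1)
    (hC : C % 4 = 1) (hD : D % 4 = 1) (hsum : (A + B + C + D) % 8 = 4)
    (hX : X % 16 = (2 * A - 1) % 16) (hY : Y % 16 = (2 * B - 1) % 16)
    (hZ : Z % 16 = (2 * C - 1) % 16) (hW : W % 16 = (2 * D - 1) % 16) :
    ∃ m : ℤ, X * Y * Z * W = 16 * m + 1 := by
  obtain ⟨k, rfl⟩ : ∃ k, X = 8 * k + 1 := ⟨X / 8, by omega⟩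
  obtain ⟨l, rfl⟩ : ∃ l, Y = 8 * l + 1 := ⟨Y / 8, by omega⟩
  obtain ⟨m, rfl⟩ : ∃ m, Z = 8 * m + 1 := ⟨Z / 8, by omega⟩
  obtain ⟨n, rfl⟩ : ∃ n, W = 8 * n + 1 := ⟨W / 8, by omega⟩
  obtain ⟨r, hr⟩ : ∃ r, k + l + m + n = 2 * r := ⟨(k + l + m + n) / 2, by omega⟩
  exact ⟨r + 4 * (k * l + k * m + k * n + l * m + l * n + m * n)
    + 32 * (k * l * m + k * l * n + k * m * n + l * m * n) + 256 * k * l * m * n, by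
      linear_combination 8 * hr⟩

theorem mem_of_mul_primes_dvd {x p q r : ℤ} (hp : p ∈ Pset) (hq : q ∈ Pset) (hr : r ∈ Pset)
    (hdvd : p * q * r ∣ x) (hx : x % 8 = 1) :
    x ∈ {y : ℤ | ∃ m : ℤ, y = 16 * m + 1} ∪ Aset := by
  rcases (by omega : x % 16 = 1 ∨ x % 16 = 9) with h | h
  · exact Or.inl ⟨x / 16, by omega⟩
  right
  have hp8 : p % 8 = 5 := hp.2.2
  have hq8 : q % 8 = 5 := hq.2.2
  have hr8 : r % 8 = 5 := hr.2.2
  obtain ⟨l, rfl⟩ : ∃ l, p = 8 * l - 3 := ⟨(p + 3) / 8, by omega⟩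
  obtain ⟨m, rfl⟩ : ∃ m, q = 8 * m - 3 := ⟨(q + 3) / 8, by omega⟩
  obtain ⟨n, rfl⟩ : ∃ n, r = 8 * n - 3 := ⟨(r + 3) / 8, by omega⟩
  obtain ⟨c, rfl⟩ := hdvd
  have hc : c % 8 = 5 := by
    have : (8 * l - 3) * (8 * m - 3) * (8 * n - 3) * c
        = 8 * ((64 * l * m * n - 24 * (l * m + m * n + n * l) + 9 * (l + m + n) - 4) * c)
          + 5 * c := by ring
    omega
  obtain ⟨k, rfl⟩ : ∃ k, c = 8 * k - 3 := ⟨(c + 3) / 8, by omega⟩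
  refine ⟨0, k, l, m, n, hp, hq, hr, ?_, by ring⟩
  intro hcon
  have h2 : (0 : ℤ) % 2 = (k + l + m + n) % 2 := hcon
  have : (8 * l - 3) * (8 * m - 3) * (8 * n - 3) * (8 * k - 3)
      = 16 * (256 * k * l * m * n - 96 * (k * l * m + k * l * n + k * m * n + l * m * n)
        + 36 * (k * l + k * m + k * n + l * m + l * n + m * n) - 14 * (k + l + m + n) + 5) + 1
        + 8 * (k + l + m + n) := by ring
  omega

/-- The additive character of `ℤ/4ℤ` sending `1` to `I`. -/
noncomputable abbrev chi : AddChar (ZMod 4) ℂ := ZMod.stdAddChar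

theorem chi_one : chi 1 = I := by
  have := ZMod.stdAddChar_coe (N := 4) 1
  simp only [Int.cast_one] at this
  rw [chi, this]
  refine Eq.trans (congrArg Complex.exp ?_) Complex.exp_pi_div_two_mul_I
  push_cast
  ring

theorem chi_two : chi 2 = -1 := by
  rw [show (2 : ZMod 4) = 1 + 1 from rfl, AddChar.map_add_eq_mul, chi_one, I_mul_I]

theorem chi_three : chi 3 = -I := by
  rw [show (3 : ZMod 4) = 2 + 1 from rfl, AddChar.map_add_eq_mul, chi_one, chi_two]
  ring

/-- The Fourier transform on `(ℤ/4ℤ)²`. -/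
noncomputable def hat (a : ZMod 4 × ZMod 4 → ℤ) (s : ZMod 4 × ZMod 4) : ℂ :=
  ∑ k : ZMod 4 × ZMod 4, a k * chi (s.1 * k.1 + s.2 * k.2)

theorem groupDet_eq_prod_hat (a : ZMod 4 × ZMod 4 → ℤ) :
    (groupDet4x4 a : ℂ) = ∏ s, hat a s := by
  let F : Matrix (ZMod 4 × ZMod 4) (ZMod 4 × ZMod 4) ℂ :=
    Matrix.of fun g s => chi (-(s.1 * g.1 + s.2 * g.2))
  let F' : Matrix (ZMod 4 × ZMod 4) (ZMod 4 × ZMod 4) ℂ :=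
    Matrix.of fun s g => chi (s.1 * g.1 + s.2 * g.2)
  let A : Matrix (ZMod 4 × ZMod 4) (ZMod 4 × ZMod 4) ℂ := Matrix.of fun g h => (a (g - h) : ℂ)
  have hA : (groupDet4x4 a : ℂ) = A.det := by
    rw [groupDet4x4, Int.cast_det]
    rfl
  have hAF : A * F = F * Matrix.diagonal (hat a) := by
    ext g s
    rw [Matrix.mul_diagonal, Matrix.mul_apply, hat, Finset.mul_sum,
      ← (Equiv.subLeft g).sum_comp]
    refine Finset.sum_congr rfl fun h _ => ?_
    simp only [A, F, Matrix.of_apply, Equiv.subLeft_apply, sub_sub_cancel]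
    rw [mul_left_comm, ← AddChar.map_add_eq_mul]
    congr 2
    simp only [Prod.fst_sub, Prod.snd_sub]
    ring
  have hFF : F * F' = (16 : ℂ) • (1 : Matrix (ZMod 4 × ZMod 4) (ZMod 4 × ZMod 4) ℂ) := by
    ext g h
    have hprim := ZMod.isPrimitive_stdAddChar 4
    have hterm : ∀ s : ZMod 4 × ZMod 4, F g s * F' s h
        = chi (s.1 * (h.1 - g.1)) * chi (s.2 * (h.2 - g.2)) := by
      intro s
      simp only [F, F', Matrix.of_apply]
      rw [← AddChar.map_add_eq_mul, ← AddChar.map_add_eq_mul]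
      congr 1
      ring
    rw [Matrix.mul_apply, Finset.sum_congr rfl fun s _ => hterm s, Fintype.sum_prod_type]
    dsimp only
    rw [← Finset.sum_mul_sum, AddChar.sum_mulShift _ hprim, AddChar.sum_mulShift _ hprim]
    simp only [Matrix.smul_apply, Matrix.one_apply, Prod.ext_iff, sub_eq_zero, eq_comm, ZMod.card]
    by_cases h1 : g.1 = h.1 <;> by_cases h2 : g.2 = h.2 <;> simp [h1, h2]
    norm_num
  have hdet : F.det ≠ 0 := by
    intro h0
    have := congrArg Matrix.det hFF
    rw [Matrix.det_mul, h0, zero_mul, Matrix.det_smul, Matrix.det_one, mul_one] at this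
    exact pow_ne_zero _ (by norm_num) this.symm
  have := congrArg Matrix.det hAF
  rw [Matrix.det_mul, Matrix.det_mul, Matrix.det_diagonal, mul_comm] at this
  rw [hA]
  exact mul_left_cancel₀ hdet this

/-- The signed sums of `a` over the cosets of `2(ℤ/4ℤ)²`, with signs given by the character of
`2(ℤ/4ℤ)²` sending `(2, 0)` to `σ` and `(0, 2)` to `τ`. -/
def fold (a : ZMod 4 × ZMod 4 → ℤ) (σ τ : ℤ) : Fin 4 → ℤ :=
  ![a (0, 0) + σ * a (2, 0) + τ * a (0, 2) + σ * τ * a (2, 2),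
    a (0, 1) + σ * a (2, 1) + τ * a (0, 3) + σ * τ * a (2, 3),
    a (1, 0) + σ * a (3, 0) + τ * a (1, 2) + σ * τ * a (3, 2),
    a (1, 1) + σ * a (3, 1) + τ * a (1, 3) + σ * τ * a (3, 3)]

theorem hat_eq_fold (a : ZMod 4 × ZMod 4 → ℤ) {s t : ZMod 4} {σ τ : ℤ}
    (hs : chi s ^ 2 = σ) (ht : chi t ^ 2 = τ) :
    hat a (s, t) = fold a σ τ 0 + fold a σ τ 1 * chi t + fold a σ τ 2 * chi s
      + fold a σ τ 3 * (chi s * chi t) := by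
  have hsum (f : ZMod 4 → ℂ) : ∑ i, f i = f 0 + f 1 + f 2 + f 3 := Fin.sum_univ_four f
  have h2 (r : ZMod 4) : chi (r * 2) = chi r ^ 2 := by
    rw [mul_two, AddChar.map_add_eq_mul, sq]
  have h3 (r : ZMod 4) : chi (r * 3) = chi r ^ 2 * chi r := by
    rw [show r * 3 = r * 2 + r by ring, AddChar.map_add_eq_mul, h2]
  simp only [hat, Fintype.sum_prod_type, hsum, AddChar.map_add_eq_mul, mul_zero, mul_one,
    AddChar.map_zero_eq_one, h2, h3, hs, ht, fold, Matrix.cons_val]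
  push_cast
  ring

/-- The determinant as the product of a Klein four-group determinant and six sums of two squares,
with the parity and Parseval relations between the variables. -/
theorem groupDet_eq (a : ZMod 4 × ZMod 4 → ℤ) :
    ∃ x y z w : Fin 4 → ℤ,
      (∀ i, x i % 2 = y i % 2 ∧ x i % 2 = z i % 2 ∧ x i % 2 = w i % 2) ∧
      ((x 0 + x 1 + x 2 + x 3) % 2 = 1 →
        (∑ i, (x i ^ 2 + y i ^ 2 + z i ^ 2 + w i ^ 2)) % 8 = 4) ∧
      groupDet4x4 a =
        (x 0 + x 1 + x 2 + x 3) * (x 0 + x 1 - x 2 - x 3) *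
          (x 0 - x 1 + x 2 - x 3) * (x 0 - x 1 - x 2 + x 3) *
        (((y 0 + y 2) ^ 2 + (y 1 + y 3) ^ 2) * ((y 0 - y 2) ^ 2 + (y 1 - y 3) ^ 2)) *
        (((z 0 + z 1) ^ 2 + (z 2 + z 3) ^ 2) * ((z 0 - z 1) ^ 2 + (z 2 - z 3) ^ 2)) *
        (((w 0 - w 3) ^ 2 + (w 1 + w 2) ^ 2) * ((w 0 + w 3) ^ 2 + (w 2 - w 1) ^ 2)) := by
  refine ⟨fold a 1 1, fold a 1 (-1), fold a (-1) 1, fold a (-1) (-1), ?_, ?_, ?_⟩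
  · intro i
    fin_cases i <;> simp [fold] <;> omega
  · intro h
    have hsq (t : ℤ) : t ^ 2 % 2 = t % 2 := by
      have := sq_mod_four t
      omega
    have hodd : (∑ i, ∑ j, a (i, j) ^ 2) % 2 = 1 := by
      rw [← h]
      have hsum (f : ZMod 4 → ℤ) : ∑ i, f i = f 0 + f 1 + f 2 + f 3 := Fin.sum_univ_four f
      simp only [hsum, fold, Matrix.cons_val]
      have h00 := hsq (a (0, 0))
      have h01 := hsq (a (0, 1))
      have h02 := hsq (a (0, 2))
      have h03 := hsq (a (0, 3))
      have h10 := hsq (a (1, 0))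
      have h11 := hsq (a (1, 1))
      have h12 := hsq (a (1, 2))
      have h13 := hsq (a (1, 3))
      have h20 := hsq (a (2, 0))
      have h21 := hsq (a (2, 1))
      have h22 := hsq (a (2, 2))
      have h23 := hsq (a (2, 3))
      have h30 := hsq (a (3, 0))
      have h31 := hsq (a (3, 1))
      have h32 := hsq (a (3, 2))
      have h33 := hsq (a (3, 3))
      omega
    have hpars : ∑ i, (fold a 1 1 i ^ 2 + fold a 1 (-1) i ^ 2 + fold a (-1) 1 i ^ 2
        + fold a (-1) (-1) i ^ 2) = 4 * ∑ i, ∑ j, a (i, j) ^ 2 := by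
      have hsum (f : ZMod 4 → ℤ) : ∑ i, f i = f 0 + f 1 + f 2 + f 3 := Fin.sum_univ_four f
      simp only [hsum, Fin.sum_univ_four, fold, Matrix.cons_val]
      ring
    omega
  · have h0 : chi 0 ^ 2 = (1 : ℤ) := by simp
    have h1 : chi 1 ^ 2 = (-1 : ℤ) := by simp [chi_one]
    have h2 : chi 2 ^ 2 = (1 : ℤ) := by simp [chi_two]
    have h3 : chi 3 ^ 2 = (-1 : ℤ) := by simp [chi_three]
    have hprod (f : ZMod 4 → ℂ) : ∏ i, f i = f 0 * f 1 * f 2 * f 3 := Fin.prod_univ_four f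
    have hdet : (groupDet4x4 a : ℂ) =
        hat a (0, 0) * hat a (2, 0) * hat a (0, 2) * hat a (2, 2)
          * (hat a (0, 1) * hat a (0, 3) * (hat a (2, 1) * hat a (2, 3)))
          * (hat a (1, 0) * hat a (3, 0) * (hat a (1, 2) * hat a (3, 2)))
          * (hat a (1, 1) * hat a (3, 3) * (hat a (1, 3) * hat a (3, 1))) := by
      rw [groupDet_eq_prod_hat, Fintype.prod_prod_type]
      simp only [hprod]
      ring
    have hY : hat a (0, 1) * hat a (0, 3) =
        ((fold a 1 (-1) 0 : ℂ) + (fold a 1 (-1) 2 : ℂ)) ^ 2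
          + ((fold a 1 (-1) 1 : ℂ) + (fold a 1 (-1) 3 : ℂ)) ^ 2 := by
      rw [hat_eq_fold a h0 h1, hat_eq_fold a h0 h3]
      simp only [AddChar.map_zero_eq_one, chi_one, chi_three]
      linear_combination
        -((fold a 1 (-1) 1 : ℂ) + (fold a 1 (-1) 3 : ℂ)) ^ 2 * I_sq
    have hY' : hat a (2, 1) * hat a (2, 3) =
        ((fold a 1 (-1) 0 : ℂ) - (fold a 1 (-1) 2 : ℂ)) ^ 2
          + ((fold a 1 (-1) 1 : ℂ) - (fold a 1 (-1) 3 : ℂ)) ^ 2 := by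
      rw [hat_eq_fold a h2 h1, hat_eq_fold a h2 h3]
      simp only [chi_one, chi_two, chi_three]
      linear_combination
        -((fold a 1 (-1) 1 : ℂ) - (fold a 1 (-1) 3 : ℂ)) ^ 2 * I_sq
    have hZ : hat a (1, 0) * hat a (3, 0) =
        ((fold a (-1) 1 0 : ℂ) + (fold a (-1) 1 1 : ℂ)) ^ 2
          + ((fold a (-1) 1 2 : ℂ) + (fold a (-1) 1 3 : ℂ)) ^ 2 := by
      rw [hat_eq_fold a h1 h0, hat_eq_fold a h3 h0]
      simp only [AddChar.map_zero_eq_one, chi_one, chi_three]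
      linear_combination
        -((fold a (-1) 1 2 : ℂ) + (fold a (-1) 1 3 : ℂ)) ^ 2 * I_sq
    have hZ' : hat a (1, 2) * hat a (3, 2) =
        ((fold a (-1) 1 0 : ℂ) - (fold a (-1) 1 1 : ℂ)) ^ 2
          + ((fold a (-1) 1 2 : ℂ) - (fold a (-1) 1 3 : ℂ)) ^ 2 := by
      rw [hat_eq_fold a h1 h2, hat_eq_fold a h3 h2]
      simp only [chi_one, chi_two, chi_three]
      linear_combination
        -((fold a (-1) 1 2 : ℂ) - (fold a (-1) 1 3 : ℂ)) ^ 2 * I_sq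
    have hW : hat a (1, 1) * hat a (3, 3) =
        ((fold a (-1) (-1) 0 : ℂ) - (fold a (-1) (-1) 3 : ℂ)) ^ 2
          + ((fold a (-1) (-1) 1 : ℂ) + (fold a (-1) (-1) 2 : ℂ)) ^ 2 := by
      rw [hat_eq_fold a h1 h1, hat_eq_fold a h3 h3]
      simp only [chi_one, chi_three]
      linear_combination
        ((fold a (-1) (-1) 3 : ℂ) * (2 * (fold a (-1) (-1) 0 : ℂ) + (fold a (-1) (-1) 3 : ℂ) * I ^ 2 - (fold a (-1) (-1) 3 : ℂ))
          - ((fold a (-1) (-1) 1 : ℂ) + (fold a (-1) (-1) 2 : ℂ)) ^ 2) * I_sq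
    have hW' : hat a (1, 3) * hat a (3, 1) =
        ((fold a (-1) (-1) 0 : ℂ) + (fold a (-1) (-1) 3 : ℂ)) ^ 2
          + ((fold a (-1) (-1) 2 : ℂ) - (fold a (-1) (-1) 1 : ℂ)) ^ 2 := by
      rw [hat_eq_fold a h1 h3, hat_eq_fold a h3 h1]
      simp only [chi_one, chi_three]
      linear_combination
        (-(fold a (-1) (-1) 3 : ℂ) * (2 * (fold a (-1) (-1) 0 : ℂ) - (fold a (-1) (-1) 3 : ℂ) * I ^ 2 + (fold a (-1) (-1) 3 : ℂ))
          - ((fold a (-1) (-1) 2 : ℂ) - (fold a (-1) (-1) 1 : ℂ)) ^ 2) * I_sq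
    rw [← Int.cast_inj (α := ℂ), hdet, hY, hY', hZ, hZ', hW, hW', hat_eq_fold a h0 h0,
      hat_eq_fold a h2 h0, hat_eq_fold a h0 h2, hat_eq_fold a h2 h2]
    simp only [AddChar.map_zero_eq_one, chi_two]
    push_cast
    congr 4
    all_goals ring

theorem stmt8 (x : ℤ) (hx : x ∈ S44) (hodd : Odd x) :
    x ∈ {y : ℤ | ∃ m : ℤ, y = 16 * m + 1} ∪ Aset := by
  obtain ⟨a, rfl⟩ := hx
  obtain ⟨x, y, z, w, hpar, hsq, hdet⟩ := groupDet_eq a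
  rw [hdet] at hodd ⊢
  clear hdet
  have hsum : (x 0 + x 1 + x 2 + x 3) % 2 = 1 := by
    simp only [Int.odd_mul] at hodd
    exact Int.odd_iff.mp hodd.1.1.1.1.1.1
  replace hsq := hsq hsum
  rw [Fin.sum_univ_four] at hsq
  have hTx := sum_sq_mod_four hsum
  have hsqpar {r t : ℤ} (h : r % 2 = t % 2) : t ^ 2 ≡ r ^ 2 [ZMOD 4] := by
    rw [Int.ModEq, sq_mod_four, sq_mod_four, h]
  have hT (u : Fin 4 → ℤ) (hu : ∀ i, x i % 2 = u i % 2) :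
      (u 0 ^ 2 + u 1 ^ 2 + u 2 ^ 2 + u 3 ^ 2) % 4
        = (x 0 ^ 2 + x 1 ^ 2 + x 2 ^ 2 + x 3 ^ 2) % 4 :=
    (((hsqpar (hu 0)).add (hsqpar (hu 1))).add (hsqpar (hu 2))).add (hsqpar (hu 3))
  have hS (u : Fin 4 → ℤ) (hu : ∀ i, x i % 2 = u i % 2) : (u 0 + u 1 + u 2 + u 3) % 2 = 1 :=
    (show _ ≡ _ [ZMOD 2] from
      (((Int.ModEq.add (hu 0) (hu 1)).add (hu 2)).add (hu 3)).symm).eq.trans hsum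
  obtain ⟨hy1, hy2⟩ :
      (y 0 + y 2 + (y 1 + y 3)) % 2 = 1 ∧ (y 0 - y 2 + (y 1 - y 3)) % 2 = 1 := by
    have := hS y fun i => (hpar i).1
    clear * - this
    omega
  obtain ⟨hz1, hz2⟩ :
      (z 0 + z 1 + (z 2 + z 3)) % 2 = 1 ∧ (z 0 - z 1 + (z 2 - z 3)) % 2 = 1 := by
    have := hS z fun i => (hpar i).2.1
    clear * - this
    omega
  obtain ⟨hw1, hw2⟩ :
      (w 0 - w 3 + (w 1 + w 2)) % 2 = 1 ∧ (w 0 + w 3 + (w 2 - w 1)) % 2 = 1 := by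
    have := hS w fun i => (hpar i).2.2
    clear * - this
    omega
  have hTy := hT y fun i => (hpar i).1
  have hTz := hT z fun i => (hpar i).2.1
  have hTw := hT w fun i => (hpar i).2.2
  have hyT : (y 0 + y 2) ^ 2 + (y 1 + y 3) ^ 2 + ((y 0 - y 2) ^ 2 + (y 1 - y 3) ^ 2)
      = 2 * (y 0 ^ 2 + y 1 ^ 2 + y 2 ^ 2 + y 3 ^ 2) := by ring
  have hzT : (z 0 + z 1) ^ 2 + (z 2 + z 3) ^ 2 + ((z 0 - z 1) ^ 2 + (z 2 - z 3) ^ 2)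
      = 2 * (z 0 ^ 2 + z 1 ^ 2 + z 2 ^ 2 + z 3 ^ 2) := by ring
  have hwT : (w 0 - w 3) ^ 2 + (w 1 + w 2) ^ 2 + ((w 0 + w 3) ^ 2 + (w 2 - w 1) ^ 2)
      = 2 * (w 0 ^ 2 + w 1 ^ 2 + w 2 ^ 2 + w 3 ^ 2) := by ring
  have hxT := klein_mod hsum
  rcases hTx with h1 | h3
  · left
    have hX := hxT.1 h1
    have hY := mul_mod_sixteen (sq_add_sq_mod_four hy1) hyT (hTy.trans h1)
    have hZ := mul_mod_sixteen (sq_add_sq_mod_four hz1) hzT (hTz.trans h1)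
    have hW := mul_mod_sixteen (sq_add_sq_mod_four hw1) hwT (hTw.trans h1)
    exact mul_four_mod_sixteen h1 (hTy.trans h1) (hTz.trans h1) (hTw.trans h1)
      (by rw [← hsq]; congr 1; ring) hX hY hZ hW
  · have hX := hxT.2 h3
    obtain ⟨⟨p, hp, hpd⟩, hY⟩ := exists_mem_Pset_dvd_mul hy1 hy2 hyT (hTy.trans h3)
    obtain ⟨⟨q, hq, hqd⟩, hZ⟩ := exists_mem_Pset_dvd_mul hz1 hz2 hzT (hTz.trans h3)
    obtain ⟨⟨r, hr, hrd⟩, hW⟩ := exists_mem_Pset_dvd_mul hw1 hw2 hwT (hTw.trans h3)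
    refine mem_of_mul_primes_dvd hp hq hr
      (mul_dvd_mul (mul_dvd_mul (hpd.mul_left _) hqd) hrd) ?_
    rw [Int.mul_emod, Int.mul_emod (_ * _), Int.mul_emod (_ * _ * _ * _), hX, hY, hZ, hW]
    rfl
end

section
/- With the notation below, suppose b_0+b_2 ≢ b_1+b_3 (mod 2), b_0b_2+b_1b_3 ≡ 0 (mod 2), and ββ̄ ≡ −3 (mod 8). Then: (1) if b_0b_2+b_1b_3 ≡ c_0c_2+c_1c_3 (mod 4), then D_4(b)·D_4(c) = (8j+1)(8k−3)(8l−3) for some integers j, k and some prime 8l−3 ∈ P with j ≢ k+l (mod 2); (2) if b_0b_2+b_1b_3 ≢ c_0c_2+c_1c_3 (mod 4), then D_4(b)·D_4(c) = (8j+1)(8k−3)(8l−3) for some integers j, k and some prime 8l−3 ∈ P with j ≡ k+l (mod 2). -/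
open Matrix Complex

theorem Int.sq_mod_eight_of_odd {x : ℤ} (hx : Odd x) : x ^ 2 % 8 = 1 := by
  have := Int.eight_dvd_sq_sub_one_of_odd hx
  omega

/-- The factorisation of the determinant of a `4 × 4` circulant matrix over the integers. -/
theorem D4_eq (x0 x1 x2 x3 : ℤ) :
    D4 x0 x1 x2 x3 =
      ((x0 + x2) ^ 2 - (x1 + x3) ^ 2) * ((x0 - x2) ^ 2 + (x1 - x3) ^ 2) := by
  simp [D4, Matrix.det_succ_row_zero, Fin.sum_univ_succ, Fin.succAbove]
  ring

theorem D4_modEq_of_even_of_odd {x0 x1 x2 x3 w : ℤ} (hw : x0 * x2 + x1 * x3 = 2 * w)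
    (hA : Even (x0 + x2)) (hC : Odd (x1 + x3)) :
    D4 x0 x1 x2 x3 ≡ -(1 + 8 * w) [ZMOD 16] := by
  have hD : D4 x0 x1 x2 x3 = ((x0 + x2) ^ 2 - (x1 + x3) ^ 2) *
      ((x0 + x2) ^ 2 + (x1 + x3) ^ 2 - 8 * w) := by
    rw [D4_eq]
    linear_combination -4 * ((x0 + x2) ^ 2 - (x1 + x3) ^ 2) * hw
  obtain ⟨u, hu⟩ := hA
  have hC8 : (x1 + x3) ^ 2 % 8 = 1 := Int.sq_mod_eight_of_odd hC
  obtain ⟨r, hr⟩ : ∃ r, (x1 + x3) ^ 2 = 8 * r + 1 := ⟨(x1 + x3) ^ 2 / 8, by omega⟩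
  rw [hD, hr, hu]
  refine (Int.modEq_iff_dvd.2 ⟨-u ^ 4 + 4 * r ^ 2 + r + 2 * w * u ^ 2 - 4 * w * r - w, ?_⟩)
  ring

theorem D4_shift (x0 x1 x2 x3 : ℤ) : D4 x1 x2 x3 x0 = -D4 x0 x1 x2 x3 := by
  simp only [D4_eq]
  ring

theorem D4_modEq_of_odd_of_even {x0 x1 x2 x3 w : ℤ} (hw : x0 * x2 + x1 * x3 = 2 * w)
    (hA : Odd (x0 + x2)) (hC : Even (x1 + x3)) :
    D4 x0 x1 x2 x3 ≡ 1 + 8 * w [ZMOD 16] := by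
  have h := D4_modEq_of_even_of_odd (x0 := x1) (x1 := x2) (x2 := x3) (x3 := x0) (w := w)
    (by linarith) hC (by rwa [add_comm])
  rw [D4_shift] at h
  simpa using h.neg

theorem D4_mul_D4_modEq {x0 x1 x2 x3 y0 y1 y2 y3 v w : ℤ}
    (hv : x0 * x2 + x1 * x3 = 2 * v) (hw : y0 * y2 + y1 * y3 = 2 * w)
    (hx : Odd (x0 + x2 + (x1 + x3)))
    (hA : Even (x0 + x2) ↔ Even (y0 + y2)) (hC : Even (x1 + x3) ↔ Even (y1 + y3)) :
    D4 x0 x1 x2 x3 * D4 y0 y1 y2 y3 ≡ 1 + 8 * (v + w) [ZMOD 16] := by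
  have key : (1 + 8 * v) * (1 + 8 * w) ≡ 1 + 8 * (v + w) [ZMOD 16] :=
    Int.modEq_iff_dvd.2 ⟨-4 * v * w, by ring⟩
  by_cases h : Even (x0 + x2)
  · have hC' : ¬ Even (x1 + x3) := fun h' => Int.not_even_iff_odd.2 hx (h.add h')
    have h1 := D4_modEq_of_even_of_odd hv h (Int.not_even_iff_odd.1 hC')
    have h2 := D4_modEq_of_even_of_odd hw (hA.1 h) (Int.not_even_iff_odd.1 (mt hC.2 hC'))
    refine (h1.mul h2).trans ?_
    rwa [neg_mul_neg]
  · have hC' : Even (x1 + x3) := by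
      by_contra h'
      exact Int.not_even_iff_odd.2 hx
        ((Int.not_even_iff_odd.1 h).add_odd (Int.not_even_iff_odd.1 h'))
    have h1 := D4_modEq_of_odd_of_even hv (Int.not_even_iff_odd.1 h) hC'
    have h2 := D4_modEq_of_odd_of_even hw (Int.not_even_iff_odd.1 (mt hA.2 h)) (hC.1 hC')
    exact (h1.mul h2).trans key

theorem Nat.mod_eight_eq_one_of_forall_prime_dvd (n : ℕ) (hn : n ≠ 0)
    (h : ∀ p : ℕ, p.Prime → p ∣ n → p % 8 = 1) : n % 8 = 1 := by
  induction n using Nat.recOnMul with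
  | zero => exact absurd rfl hn
  | one => rfl
  | prime p hp => exact h p hp dvd_rfl
  | mul a b ha hb =>
    have h1 := ha (left_ne_zero_of_mul hn) fun p hp hd => h p hp (hd.mul_right b)
    have h2 := hb (right_ne_zero_of_mul hn) fun p hp hd => h p hp (hd.mul_left a)
    rw [Nat.mul_mod, h1, h2]

theorem Nat.exists_prime_mod_eight_eq_five_dvd_sq_add_sq {n x y : ℕ} (hn : n = x ^ 2 + y ^ 2)
    (h5 : n % 8 = 5) : ∃ p : ℕ, p.Prime ∧ p % 8 = 5 ∧ p ∣ n := by
  obtain ⟨a, b, hab, hb⟩ := Nat.eq_sq_add_sq_iff_eq_sq_mul.1 ⟨x, y, hn⟩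
  have hodd : Odd n := Nat.odd_iff.2 (by omega)
  rw [hab, Nat.odd_mul] at hodd
  have ha8 : a ^ 2 % 8 = 1 := by
    have := Int.sq_mod_eight_of_odd (Int.odd_coe_nat a |>.2 (Nat.Odd.of_mul_right
      (by rw [← sq]; exact hodd.1)))
    exact_mod_cast this
  have hb5 : b % 8 = 5 := by
    rw [hab, Nat.mul_mod, ha8] at h5
    omega
  by_contra! hno
  have := Nat.mod_eight_eq_one_of_forall_prime_dvd b (by omega) fun p hp hpb => by
    have hp5 : p % 8 ≠ 5 := fun h => hno p hp h (hab ▸ hpb.mul_left _)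
    have hp2 := Odd.of_dvd_nat hodd.2 hpb
    have hp3 := Nat.mod_four_ne_three_of_mem_primeFactors_of_isSquare_neg_one
      (Nat.mem_primeFactors.2 ⟨hp, hpb, by omega⟩) hb
    rw [Nat.odd_iff] at hp2
    omega
  omega

theorem Int.exists_mem_Pset_dvd_sq_add_sq {x y : ℤ} (h5 : x ^ 2 + y ^ 2 ≡ 5 [ZMOD 8]) :
    ∃ l : ℤ, 8 * l - 3 ∈ Pset ∧ 8 * l - 3 ∣ x ^ 2 + y ^ 2 := by
  have hcast : ((x.natAbs ^ 2 + y.natAbs ^ 2 : ℕ) : ℤ) = x ^ 2 + y ^ 2 := by simp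
  obtain ⟨p, hp, hp5, hpd⟩ := Nat.exists_prime_mod_eight_eq_five_dvd_sq_add_sq
    (n := x.natAbs ^ 2 + y.natAbs ^ 2) rfl (by rw [← hcast] at h5; unfold Int.ModEq at h5; omega)
  have hl : 8 * (((p : ℤ) + 3) / 8) - 3 = p := by omega
  refine ⟨((p : ℤ) + 3) / 8, ?_, ?_⟩ <;> rw [hl]
  · refine ⟨Nat.prime_iff_prime_int.1 hp, mod_cast hp.pos, ?_⟩
    unfold Int.ModEq
    omega
  · rw [← hcast]
    exact_mod_cast hpd

/-- The squared modulus of `β` in terms of the real and imaginary parts of `α₀ + α₂` and `α₁ + α₃`. -/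
theorem betaD_mul_conj (d : ℕ → ℤ) :
    betaD d * (starRingEnd ℂ) (betaD d) =
      (((d 0 + d 2) ^ 2 + (d 4 + d 6) ^ 2 + (d 1 + d 3) ^ 2 + (d 5 + d 7) ^ 2) ^ 2 -
        4 * ((d 0 + d 2) * (d 1 + d 3) + (d 4 + d 6) * (d 5 + d 7)) ^ 2 : ℤ) := by
  rw [Complex.mul_conj, ← Complex.ofReal_intCast]
  congr 1
  simp [betaD, alphaD, Complex.normSq_apply, sq]
  ring

theorem odd_of_sq_sub_four_mul_sq {s t : ℤ} (h : s ^ 2 - 4 * t ^ 2 ≡ -3 [ZMOD 8]) : Odd t := by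
  by_contra ht
  obtain ⟨u, hu⟩ := Int.not_odd_iff_even.1 ht
  have hs : Odd s := by
    by_contra hs
    obtain ⟨r, hr⟩ := Int.not_odd_iff_even.1 hs
    subst hr
    ring_nf at h
    unfold Int.ModEq at h
    omega
  have := Int.sq_mod_eight_of_odd hs
  subst hu
  ring_nf at h this
  unfold Int.ModEq at h
  omega

/-- Two sums of two squares attached to `P, Q, R, S`, one of which is `5` modulo `8`. -/
theorem sq_add_sq_modEq_five_or {P Q R S : ℤ} (hodd : Odd (P + Q + (R + S)))
    (hPR : Odd (P * R + Q * S)) :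
    (P + Q) ^ 2 + (R + S) ^ 2 ≡ 5 [ZMOD 8] ∨ (P - Q) ^ 2 + (R - S) ^ 2 ≡ 5 [ZMOD 8] := by
  have hdiff : Odd (P * Q + R * S) := by
    simp only [Int.odd_add, Int.odd_mul, ← Int.not_odd_iff_even] at *
    tauto
  obtain ⟨m, hm⟩ := hdiff
  have key : ((P + Q) ^ 2 + (R + S) ^ 2) - ((P - Q) ^ 2 + (R - S) ^ 2) = 8 * m + 4 := by
    linear_combination 4 * hm
  have hone : ((P + Q) ^ 2 + (R + S) ^ 2) % 4 = 1 := by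
    rcases Int.even_or_odd (P + Q) with h | h
    · have h' : Odd (R + S) := by
        by_contra h'
        exact Int.not_even_iff_odd.2 hodd (h.add (Int.not_odd_iff_even.1 h'))
      obtain ⟨u, hu⟩ := h
      have := Int.sq_mod_four_eq_one_of_odd h'
      have h2 : (P + Q) ^ 2 = 4 * u ^ 2 := by rw [hu]; ring
      omega
    · have h' : Even (R + S) := by
        by_contra h'
        exact Int.not_even_iff_odd.2 hodd (h.add_odd (Int.not_even_iff_odd.1 h'))
      obtain ⟨u, hu⟩ := h'
      have := Int.sq_mod_four_eq_one_of_odd h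
      have h2 : (R + S) ^ 2 = 4 * u ^ 2 := by rw [hu]; ring
      omega
  unfold Int.ModEq
  omega

theorem exists_factorization_of_dvd {N l : ℤ} (hd : 8 * l - 3 ∣ N) (hN : N ≡ 1 [ZMOD 8]) :
    ∃ k : ℤ, N = (8 * 0 + 1) * (8 * k - 3) * (8 * l - 3) := by
  obtain ⟨r, rfl⟩ := hd
  refine ⟨(r + 3) / 8, ?_⟩
  have h : (8 * l - 3) * r = 8 * (l * r) - 3 * r := by ring
  rw [h] at hN
  unfold Int.ModEq at hN
  have hr : 8 * ((r + 3) / 8) - 3 = r := by omega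
  rw [hr]
  ring

theorem stmt11 (a : ℕ → ℤ) (B : ℤ)
    (hB : (B : ℂ) = betaD (dd a) * (starRingEnd ℂ) (betaD (dd a)))
    (h1 : ¬ (bI a 0 + bI a 2 ≡ bI a 1 + bI a 3 [ZMOD 2]))
    (h2 : bI a 0 * bI a 2 + bI a 1 * bI a 3 ≡ 0 [ZMOD 2])
    (h3 : B ≡ -3 [ZMOD 8]) :
    ((bI a 0 * bI a 2 + bI a 1 * bI a 3 ≡ cI a 0 * cI a 2 + cI a 1 * cI a 3 [ZMOD 4]) →
      ∃ j k l : ℤ, (8 * l - 3) ∈ Pset ∧ ¬ (j ≡ k + l [ZMOD 2]) ∧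
        D4 (bI a 0) (bI a 1) (bI a 2) (bI a 3) * D4 (cI a 0) (cI a 1) (cI a 2) (cI a 3) =
          (8 * j + 1) * (8 * k - 3) * (8 * l - 3)) ∧
    ((¬ (bI a 0 * bI a 2 + bI a 1 * bI a 3 ≡ cI a 0 * cI a 2 + cI a 1 * cI a 3 [ZMOD 4])) →
      ∃ j k l : ℤ, (8 * l - 3) ∈ Pset ∧ j ≡ k + l [ZMOD 2] ∧
        D4 (bI a 0) (bI a 1) (bI a 2) (bI a 3) * D4 (cI a 0) (cI a 1) (cI a 2) (cI a 3) =
          (8 * j + 1) * (8 * k - 3) * (8 * l - 3)) := by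
  obtain ⟨v, hv⟩ : ∃ v, bI a 0 * bI a 2 + bI a 1 * bI a 3 = 2 * v :=
    (Int.modEq_zero_iff_dvd.1 h2)
  have hodd : Odd (bI a 0 + bI a 2 + (bI a 1 + bI a 3)) := by
    rw [Int.odd_iff]
    unfold Int.ModEq at h1
    omega
  have hbc (i : ℕ) : bI a i = cI a i + 2 * (a (i + 4) + a (i + 12)) := by
    simp only [bI, cI]
    ring
  obtain ⟨w, hw⟩ : ∃ w, cI a 0 * cI a 2 + cI a 1 * cI a 3 = 2 * w := by
    simp only [hbc] at hv
    refine ⟨v - (a 4 + a 12) * cI a 2 - (a 6 + a 14) * bI a 0 - (a 5 + a 13) * cI a 3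
      - (a 7 + a 15) * bI a 1, ?_⟩
    simp only [hbc]
    linear_combination hv
  have hmod := D4_mul_D4_modEq hv hw hodd
    (by simp only [Int.even_iff, hbc]; omega) (by simp only [Int.even_iff, hbc]; omega)
  have hPR : Odd ((dd a 0 + dd a 2) * (dd a 1 + dd a 3) +
      (dd a 4 + dd a 6) * (dd a 5 + dd a 7)) := by
    rw [betaD_mul_conj, Int.cast_inj] at hB
    exact odd_of_sq_sub_four_mul_sq (hB ▸ h3)
  have hpar : Odd ((a 0 + a 8 + (a 2 + a 10)) * (a 1 + a 9 + (a 3 + a 11)) +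
      (a 4 + a 12 + (a 6 + a 14)) * (a 5 + a 13 + (a 7 + a 15))) := by
    simp only [dd, Int.odd_add, Int.odd_sub, Int.odd_mul, ← Int.not_odd_iff_even] at hPR ⊢
    exact hPR
  have hdvd : ∃ l : ℤ, 8 * l - 3 ∈ Pset ∧ 8 * l - 3 ∣
      D4 (bI a 0) (bI a 1) (bI a 2) (bI a 3) * D4 (cI a 0) (cI a 1) (cI a 2) (cI a 3) := by
    rcases sq_add_sq_modEq_five_or (by simp only [bI] at hodd; convert hodd using 1; ring) hpar
      with h | h
    · obtain ⟨l, hl, hd⟩ := Int.exists_mem_Pset_dvd_sq_add_sq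
        (x := bI a 0 - bI a 2) (y := bI a 1 - bI a 3) (by
          refine Int.ModEq.trans (Int.modEq_iff_dvd.2 ⟨v, ?_⟩) h
          rw [← sub_eq_zero]
          simp only [bI] at hv ⊢
          linear_combination 4 * hv)
      exact ⟨l, hl, (hd.trans (D4_eq .. ▸ dvd_mul_left _ _)).mul_right _⟩
    · obtain ⟨l, hl, hd⟩ := Int.exists_mem_Pset_dvd_sq_add_sq
        (x := cI a 0 - cI a 2) (y := cI a 1 - cI a 3) (by
          refine Int.ModEq.trans (Int.modEq_iff_dvd.2 ⟨w, ?_⟩) h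
          rw [← sub_eq_zero]
          simp only [cI] at hw ⊢
          linear_combination 4 * hw)
      exact ⟨l, hl, (hd.trans (D4_eq .. ▸ dvd_mul_left _ _)).mul_left _⟩
  obtain ⟨l, hl, hd⟩ := hdvd
  obtain ⟨k, hk⟩ := exists_factorization_of_dvd hd (by unfold Int.ModEq at hmod ⊢; omega)
  have hkl : (8 * 0 + 1) * (8 * k - 3) * (8 * l - 3) = 64 * (k * l) - 24 * (k + l) + 9 := by ring
  rw [hk, hkl] at hmod
  rw [hv, hw]
  unfold Int.ModEq at hmod ⊢
  exact ⟨fun h => ⟨0, k, l, hl, by omega, hk⟩, fun h => ⟨0, k, l, hl, by omega, hk⟩⟩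
end

section
/- Every even integer belonging to S(C_4^2) is divisible by 2^15; moreover, every element of S(C_4^2) of the form 2^15 times an odd integer can be written as 2^15 · p · (2m+1) for some prime p ∈ P and some integer m. -/
open Matrix Complex

namespace GroupDetC4Sq

/-- The real part of `I ^ k`. -/
def cosQuarter : ZMod 4 → ℤ := ![1, 0, -1, 0]

/-- The imaginary part of `I ^ k`. -/
def sinQuarter : ZMod 4 → ℤ := ![0, 1, 0, -1]

/-- The pairing on `(ZMod 4) ^ 2` identifying the group with its dual. -/
def pairing (c u : ZMod 4 × ZMod 4) : ZMod 4 := c.1 * u.1 + c.2 * u.2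

/-- The real part of the Fourier transform of `a` at `c`. -/
def fourierRe (a : ZMod 4 × ZMod 4 → ℤ) (c : ZMod 4 × ZMod 4) : ℤ :=
  ∑ u, a u * cosQuarter (pairing c u)

/-- The imaginary part of the Fourier transform of `a` at `c`. -/
def fourierIm (a : ZMod 4 × ZMod 4 → ℤ) (c : ZMod 4 × ZMod 4) : ℤ :=
  ∑ u, a u * sinQuarter (pairing c u)

/-- The squared absolute value of the Fourier transform of `a` at `c`. -/
def fourierNorm (a : ZMod 4 × ZMod 4 → ℤ) (c : ZMod 4 × ZMod 4) : ℤ :=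
  fourierRe a c ^ 2 + fourierIm a c ^ 2

/-- The complex number `I ^ k`. -/
noncomputable def quarterTurn (k : ZMod 4) : ℂ := cosQuarter k + sinQuarter k * I

theorem quarterTurn_add (j k : ZMod 4) :
    quarterTurn (j + k) = quarterTurn j * quarterTurn k := by
  have hc : cosQuarter (j + k) = cosQuarter j * cosQuarter k - sinQuarter j * sinQuarter k := by
    decide +revert
  have hs : sinQuarter (j + k) = cosQuarter j * sinQuarter k + sinQuarter j * cosQuarter k := by
    decide +revert
  simp only [quarterTurn, hc, hs]
  push_cast
  linear_combination -(sinQuarter j * sinQuarter k : ℂ) * I_sq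

theorem sum_zmod_four {M : Type*} [AddCommMonoid M] (f : ZMod 4 → M) :
    ∑ i, f i = f 0 + f 1 + f 2 + f 3 := Fin.sum_univ_four f

theorem prod_zmod_four {M : Type*} [CommMonoid M] (f : ZMod 4 → M) :
    ∏ i, f i = f 0 * f 1 * f 2 * f 3 := Fin.prod_univ_four f

theorem sum_quarterTurn_mul (c : ZMod 4) :
    ∑ k, quarterTurn (c * k) = if c = 0 then 4 else 0 := by
  have hc : ∑ k, cosQuarter (c * k) = if c = 0 then 4 else 0 := by decide +revert
  have hs : ∑ k, sinQuarter (c * k) = 0 := by decide +revert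
  simp only [quarterTurn, Finset.sum_add_distrib, ← Finset.sum_mul, ← Int.cast_sum, hc, hs]
  split_ifs <;> simp

/-- The Fourier transform of `a`. -/
noncomputable def fourier (a : ZMod 4 × ZMod 4 → ℤ) (c : ZMod 4 × ZMod 4) : ℂ :=
  ∑ u, a u * quarterTurn (pairing c u)

theorem fourier_eq (a : ZMod 4 × ZMod 4 → ℤ) (c : ZMod 4 × ZMod 4) :
    fourier a c = fourierRe a c + fourierIm a c * I := by
  simp only [fourier, fourierRe, fourierIm, quarterTurn, mul_add, Finset.sum_add_distrib,
    Int.cast_sum, Finset.sum_mul, Int.cast_mul, mul_assoc]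

/-- The character table of `(ZMod 4) ^ 2`. -/
noncomputable def characterTable : Matrix (ZMod 4 × ZMod 4) (ZMod 4 × ZMod 4) ℂ :=
  Matrix.of fun g c => quarterTurn (-pairing c g)

theorem det_characterTable_ne_zero : characterTable.det ≠ 0 := by
  have h : (Matrix.of fun c g => quarterTurn (pairing c g)) * characterTable =
      (16 : ℂ) • (1 : Matrix (ZMod 4 × ZMod 4) (ZMod 4 × ZMod 4) ℂ) := by
    ext c d
    have hterm (g : ZMod 4 × ZMod 4) :
        quarterTurn (pairing c g) * quarterTurn (-pairing d g) =
          quarterTurn ((c.1 - d.1) * g.1) * quarterTurn ((c.2 - d.2) * g.2) := by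
      rw [← quarterTurn_add, ← quarterTurn_add]
      congr 1
      simp only [pairing]
      ring
    simp only [Matrix.mul_apply, characterTable, Matrix.of_apply, hterm, Fintype.sum_prod_type,
      ← Finset.mul_sum, ← Finset.sum_mul, sum_quarterTurn_mul, sub_eq_zero, Matrix.smul_apply,
      Matrix.one_apply, Prod.ext_iff, smul_eq_mul]
    split_ifs <;> first | (norm_num; done) | (exfalso; tauto)
  have hdet := congrArg Matrix.det h
  rw [Matrix.det_mul, Matrix.det_smul, Matrix.det_one, mul_one] at hdet
  intro h0
  rw [h0, mul_zero] at hdet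
  exact pow_ne_zero _ (by norm_num) hdet.symm

theorem groupDet_eq_prod_fourier (a : ZMod 4 × ZMod 4 → ℤ) :
    (groupDet4x4 a : ℂ) = ∏ c, fourier a c := by
  have h : (Matrix.of fun g h => (a (g - h) : ℂ)) * characterTable =
      characterTable * Matrix.diagonal (fourier a) := by
    ext g c
    rw [Matrix.mul_diagonal, Matrix.mul_apply, ← (Equiv.subLeft g).sum_comp, fourier,
      Finset.mul_sum]
    refine Finset.sum_congr rfl fun u _ => ?_
    have : -pairing c (g - u) = -pairing c g + pairing c u := by
      simp only [pairing, Prod.fst_sub, Prod.snd_sub]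
      ring
    simp only [Matrix.of_apply, characterTable, Equiv.subLeft_apply, sub_sub_cancel, this,
      quarterTurn_add]
    ring
  have hdet := congrArg Matrix.det h
  rw [Matrix.det_mul, Matrix.det_mul, Matrix.det_diagonal, mul_comm] at hdet
  rw [← mul_left_cancel₀ det_characterTable_ne_zero hdet]
  exact (Int.castRingHom ℂ).map_det _

theorem fourier_mul_fourier_neg (a : ZMod 4 × ZMod 4 → ℤ) (c : ZMod 4 × ZMod 4) :
    fourier a c * fourier a (-c) = fourierNorm a c := by
  have hpair (u : ZMod 4 × ZMod 4) : pairing (-c) u = -pairing c u := by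
    simp only [pairing, Prod.fst_neg, Prod.snd_neg]
    ring
  have hcos (k : ZMod 4) : cosQuarter (-k) = cosQuarter k := by decide +revert
  have hsin (k : ZMod 4) : sinQuarter (-k) = -sinQuarter k := by decide +revert
  have hre : fourierRe a (-c) = fourierRe a c := by simp only [fourierRe, hpair, hcos]
  have him : fourierIm a (-c) = -fourierIm a c := by
    simp only [fourierIm, hpair, hsin, mul_neg, Finset.sum_neg_distrib]
  rw [fourier_eq, fourier_eq, hre, him, fourierNorm]
  push_cast
  linear_combination -(fourierIm a c : ℂ) ^ 2 * I_sq

theorem fourier_eq_fourierRe (a : ZMod 4 × ZMod 4 → ℤ) {c : ZMod 4 × ZMod 4} (hc : 2 • c = 0) :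
    fourier a c = fourierRe a c := by
  have hsin : ∀ c : ZMod 4 × ZMod 4, 2 • c = 0 → ∀ u, sinQuarter (pairing c u) = 0 := by decide
  simp [fourier_eq, fourierIm, hsin c hc]

theorem groupDet_eq (a : ZMod 4 × ZMod 4 → ℤ) :
    groupDet4x4 a =
      fourierRe a (0, 0) * fourierRe a (2, 0) * fourierRe a (0, 2) * fourierRe a (2, 2) *
      (fourierNorm a (1, 0) * fourierNorm a (1, 2)) *
      (fourierNorm a (0, 1) * fourierNorm a (2, 1) * fourierNorm a (1, 1) *
        fourierNorm a (1, 3)) := by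
  have h : (groupDet4x4 a : ℂ) = _ := groupDet_eq_prod_fourier a
  simp only [Fintype.prod_prod_type, prod_zmod_four] at h
  have h10 : fourier a (1, 0) * fourier a (3, 0) = _ := fourier_mul_fourier_neg a (1, 0)
  have h12 : fourier a (1, 2) * fourier a (3, 2) = _ := fourier_mul_fourier_neg a (1, 2)
  have h01 : fourier a (0, 1) * fourier a (0, 3) = _ := fourier_mul_fourier_neg a (0, 1)
  have h21 : fourier a (2, 1) * fourier a (2, 3) = _ := fourier_mul_fourier_neg a (2, 1)
  have h11 : fourier a (1, 1) * fourier a (3, 3) = _ := fourier_mul_fourier_neg a (1, 1)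
  have h13 : fourier a (1, 3) * fourier a (3, 1) = _ := fourier_mul_fourier_neg a (1, 3)
  rw [fourier_eq_fourierRe a (c := (0, 0)) (by decide),
    fourier_eq_fourierRe a (c := (2, 0)) (by decide),
    fourier_eq_fourierRe a (c := (0, 2)) (by decide),
    fourier_eq_fourierRe a (c := (2, 2)) (by decide)] at h
  apply Int.cast_injective (α := ℂ)
  rw [h]
  push_cast
  rw [← h10, ← h12, ← h01, ← h21, ← h11, ← h13]
  ring

theorem groupDet_comp_equiv (a : ZMod 4 × ZMod 4 → ℤ) (σ : ZMod 4 × ZMod 4 ≃+ ZMod 4 × ZMod 4) :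
    groupDet4x4 (a ∘ σ) = groupDet4x4 a := by
  rw [groupDet4x4, groupDet4x4,
    ← Matrix.det_submatrix_equiv_self σ.toEquiv (Matrix.of fun g h => a (g - h))]
  congr 1
  ext g h
  simp

/-- The automorphism `(k, l) ↦ (k - l, l)`. -/
def shear : ZMod 4 × ZMod 4 ≃+ ZMod 4 × ZMod 4 where
  toFun u := (u.1 - u.2, u.2)
  invFun u := (u.1 + u.2, u.2)
  left_inv u := by simp
  right_inv u := by simp
  map_add' u v := by
    ext
    · simp only [Prod.fst_add, Prod.snd_add]
      ring
    · simp

theorem exists_prime_dvd_of_sq_add_sq {n x y : ℕ} (hn : n = x ^ 2 + y ^ 2) (h5 : n % 8 = 5) :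
    ∃ p, p.Prime ∧ p % 8 = 5 ∧ p ∣ n := by
  by_contra! hno
  have hn0 : n ≠ 0 := by omega
  have hfac := Nat.eq_sq_add_sq_iff.mp ⟨x, y, hn⟩
  have hone : ((∏ p ∈ n.primeFactors, p ^ n.factorization p : ℕ) : ZMod 8) = 1 := by
    rw [Nat.cast_prod]
    refine Finset.prod_eq_one fun p hp => ?_
    have hpp := Nat.prime_of_mem_primeFactors hp
    have hpn := Nat.dvd_of_mem_primeFactors hp
    have hodd : p % 2 = 1 := by
      rcases hpp.eq_two_or_odd with rfl | h
      · omega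
      · exact h
    have hp5 : p % 8 ≠ 5 := fun h => hno p hpp h hpn
    push_cast
    rw [← ZMod.natCast_mod p 8]
    obtain h | h : p % 8 = 1 ∨ p % 4 = 3 := by omega
    · simp [h]
    · obtain ⟨k, hk⟩ := hfac p hp h
      rw [Nat.factorization_def n hpp, hk, ← two_mul, pow_mul]
      have hsq : (((p % 8 : ℕ) : ZMod 8)) ^ 2 = 1 := by
        obtain h | h : p % 8 = 3 ∨ p % 8 = 7 := by omega
        all_goals
          rw [h]
          decide
      rw [hsq, one_pow]
  have hprod : ∏ p ∈ n.primeFactors, p ^ n.factorization p = n :=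
    Nat.prod_factorization_pow_eq_self hn0
  rw [hprod, ← ZMod.natCast_mod, h5] at hone
  exact absurd hone (by decide)

theorem exists_mem_Pset_dvd {u v : ℤ} (h : (u ^ 2 + v ^ 2) % 8 = 5) :
    ∃ p ∈ Pset, p ∣ u ^ 2 + v ^ 2 := by
  have habs : ((u.natAbs ^ 2 + v.natAbs ^ 2 : ℕ) : ℤ) = u ^ 2 + v ^ 2 := by simp
  obtain ⟨p, hp, hp5, hpn⟩ := exists_prime_dvd_of_sq_add_sq (x := u.natAbs) (y := v.natAbs) rfl
    (by omega)
  refine ⟨p, ⟨Nat.prime_iff_prime_int.mp hp, mod_cast hp.pos, ?_⟩, ?_⟩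
  · rw [Int.ModEq]
    omega
  · rw [← habs]
    exact Int.natCast_dvd_natCast.mpr hpn

theorem fourierRe_add_fourierIm_emod_two (a : ZMod 4 × ZMod 4 → ℤ) (c : ZMod 4 × ZMod 4) :
    (fourierRe a c + fourierIm a c - fourierRe a (0, 0)) % 2 = 0 := by
  have hdvd : ∀ k, (2 : ℤ) ∣ cosQuarter k + sinQuarter k - cosQuarter 0 := by decide
  have hzero (u : ZMod 4 × ZMod 4) : pairing (0, 0) u = 0 := by simp [pairing]
  rw [fourierRe, fourierIm, fourierRe, ← Finset.sum_add_distrib, ← Finset.sum_sub_distrib]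
  refine Int.emod_eq_zero_of_dvd (Finset.dvd_sum fun u _ => ?_)
  rw [← mul_add, ← mul_sub, hzero]
  exact (hdvd _).mul_left _

theorem two_mul_fourierIm_emod_four (a : ZMod 4 × ZMod 4 → ℤ) (c : ZMod 4 × ZMod 4) :
    (2 * fourierIm a c - (fourierRe a (0, 0) - fourierRe a (2 * c))) % 4 = 0 := by
  have hdvd : ∀ k, (4 : ℤ) ∣ 2 * sinQuarter k - (cosQuarter 0 - cosQuarter (2 * k)) := by decide
  have hzero (u : ZMod 4 × ZMod 4) : pairing (0, 0) u = 0 := by simp [pairing]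
  have htwo (u : ZMod 4 × ZMod 4) : pairing (2 * c) u = 2 * pairing c u := by
    simp only [pairing, Prod.fst_mul, Prod.snd_mul, Prod.fst_ofNat, Prod.snd_ofNat]
    ring
  rw [fourierIm, fourierRe, fourierRe, Finset.mul_sum, ← Finset.sum_sub_distrib,
    ← Finset.sum_sub_distrib]
  refine Int.emod_eq_zero_of_dvd (Finset.dvd_sum fun u _ => ?_)
  rw [htwo, hzero, ← mul_sub, mul_left_comm, ← mul_sub]
  exact (hdvd _).mul_left _

theorem sum_fourierRe_emod_four (a : ZMod 4 × ZMod 4 → ℤ) :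
    (fourierRe a (0, 0) + fourierRe a (2, 0) + fourierRe a (0, 2) + fourierRe a (2, 2)) % 4 =
      0 := by
  simp only [fourierRe, Fintype.sum_prod_type, sum_zmod_four, pairing]
  reduce_mod_char
  simp [cosQuarter]
  omega

theorem fourier_sub_fourier_emod_four (a : ZMod 4 × ZMod 4 → ℤ) :
    (fourierRe a (1, 0) + fourierIm a (1, 0) - (fourierRe a (1, 2) + fourierIm a (1, 2)) -
      (fourierRe a (0, 0) - fourierRe a (0, 2))) % 4 = 0 := by
  simp only [fourierRe, fourierIm, Fintype.sum_prod_type, sum_zmod_four, pairing]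
  reduce_mod_char
  simp [cosQuarter, sinQuarter]
  omega

/-- Parseval's identity on the characters that are trivial, respectively nontrivial, on the
subgroup generated by `(0, 2)`; the two right-hand sides are congruent to each other. -/
theorem exists_parseval (a : ZMod 4 × ZMod 4 → ℤ) :
    ∃ s d : ℤ,
      fourierRe a (0, 0) ^ 2 + fourierRe a (2, 0) ^ 2 + fourierRe a (0, 2) ^ 2 +
        fourierRe a (2, 2) ^ 2 + 2 * (fourierNorm a (1, 0) + fourierNorm a (1, 2)) = 8 * s ∧
      fourierNorm a (0, 1) + fourierNorm a (2, 1) + fourierNorm a (1, 1) + fourierNorm a (1, 3) =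
        4 * (s - 4 * d) := by
  refine ⟨∑ k, ((a (k, 0) + a (k, 2)) ^ 2 + (a (k, 1) + a (k, 3)) ^ 2),
    ∑ k, (a (k, 0) * a (k, 2) + a (k, 1) * a (k, 3)), ?_⟩
  simp only [fourierNorm, fourierRe, fourierIm, Fintype.sum_prod_type, sum_zmod_four, pairing]
  reduce_mod_char
  simp [cosQuarter, sinQuarter]
  constructor <;> ring

theorem sq_add_sq_emod_four_of_odd {x y : ℤ} (h : Odd (x ^ 2 + y ^ 2)) :
    (x ^ 2 + y ^ 2) % 4 = 1 := by
  rw [Int.odd_add, Int.odd_pow' two_ne_zero, Int.even_pow' two_ne_zero] at h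
  rcases Int.even_or_odd x with hx | hx
  · have hy : Odd y := by
      rw [← Int.not_even_iff_odd, ← h, Int.not_odd_iff_even]
      exact hx
    have := Int.sq_mod_four_eq_one_of_odd hy
    obtain ⟨k, rfl⟩ := hx
    ring_nf at this ⊢
    omega
  · obtain ⟨k, rfl⟩ := h.mp hx
    have := Int.sq_mod_four_eq_one_of_odd hx
    ring_nf at this ⊢
    omega

theorem exists_eq_two_mul_of_even_add {x y : ℤ} (h : (x + y) % 2 = 0) :
    ∃ u v : ℤ, x ^ 2 + y ^ 2 = 2 * (u ^ 2 + v ^ 2) := by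
  obtain ⟨u, hu⟩ : (2 : ℤ) ∣ x + y := Int.dvd_of_emod_eq_zero h
  obtain ⟨v, hv⟩ : (2 : ℤ) ∣ x - y := by omega
  refine ⟨u, v, ?_⟩
  obtain rfl : x = u + v := by omega
  obtain rfl : y = u - v := by omega
  ring

theorem sq_emod_eight_of_odd {x : ℤ} (hx : Odd x) : x ^ 2 % 8 = 1 := by
  have := Int.eight_dvd_sq_sub_one_of_odd hx
  omega

/-- If the Fourier values of `a` are divisible by the least powers of two that parity allows, then
Parseval's identity forces one of the `nᵢ` to be `5` modulo `8`. -/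
theorem exists_emod_eight_eq_five {q₁ q₂ p₁ p₂ m₁ m₂ n₁ n₂ n₃ n₄ s d t : ℤ} (ht : Odd t)
    (hprod : 4 * (q₁ * q₂ * p₁ * p₂) * (m₁ * m₂) * (n₁ * n₂ * n₃ * n₄) = 8 * t)
    (hm : Odd (m₁ + m₂)) (hm₁ : Odd m₁ → m₁ % 4 = 1) (hm₂ : Odd m₂ → m₂ % 4 = 1)
    (hn₁ : Odd n₁ → n₁ % 4 = 1) (hn₂ : Odd n₂ → n₂ % 4 = 1) (hn₃ : Odd n₃ → n₃ % 4 = 1)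
    (hn₄ : Odd n₄ → n₄ % 4 = 1)
    (hs : 16 * (q₁ ^ 2 + q₂ ^ 2) + 4 * (p₁ ^ 2 + p₂ ^ 2) + 8 * (m₁ + m₂) = 8 * s)
    (hd : n₁ + n₂ + n₃ + n₄ = 2 * (s - 4 * d)) :
    n₁ % 8 = 5 ∨ n₂ % 8 = 5 ∨ n₃ % 8 = 5 ∨ n₄ % 8 = 5 := by
  wlog he : Even m₁ generalizing m₁ m₂
  · refine this (m₁ := m₂) (m₂ := m₁) ?_ ?_ hm₂ hm₁ ?_ ?_
    · rw [mul_comm m₂, hprod]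
    · rwa [add_comm]
    · rw [add_comm m₂, hs]
    · rw [Int.odd_add, ← Int.not_even_iff_odd] at hm
      tauto
  obtain ⟨k, rfl⟩ := he.two_dvd
  have hodd : Odd (q₁ * q₂ * p₁ * p₂ * (k * m₂) * (n₁ * n₂ * n₃ * n₄)) := by
    have : q₁ * q₂ * p₁ * p₂ * (k * m₂) * (n₁ * n₂ * n₃ * n₄) = t := by linarith
    rwa [this]
  simp only [Int.odd_mul] at hodd
  obtain ⟨⟨⟨⟨⟨hq₁, hq₂⟩, hp₁⟩, hp₂⟩, hk, hm₂'⟩, ⟨⟨h₁, h₂⟩, h₃⟩, h₄⟩ := hodd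
  have := sq_emod_eight_of_odd hq₁
  have := sq_emod_eight_of_odd hq₂
  have := sq_emod_eight_of_odd hp₁
  have := sq_emod_eight_of_odd hp₂
  have := hm₂ hm₂'
  have := hn₁ h₁
  have := hn₂ h₂
  have := hn₃ h₃
  have := hn₄ h₄
  have := Int.odd_iff.mp hk
  omega

theorem dvd_and_exists_emod_eight_eq_five {D r₁ r₂ r₃ r₄ m₁ m₂ n₁ n₂ n₃ n₄ s d : ℤ}
    (hr : (r₁ % 2 = 0 ∧ r₂ % 2 = 0) ∨ (r₃ % 2 = 0 ∧ r₄ % 2 = 0))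
    (hD : D = 2 ^ 12 * (r₁ * r₂ * (r₃ * r₄) * (m₁ * m₂) * (n₁ * n₂ * n₃ * n₄)))
    (hm : Odd (m₁ + m₂)) (hm₁ : Odd m₁ → m₁ % 4 = 1) (hm₂ : Odd m₂ → m₂ % 4 = 1)
    (hn₁ : Odd n₁ → n₁ % 4 = 1) (hn₂ : Odd n₂ → n₂ % 4 = 1) (hn₃ : Odd n₃ → n₃ % 4 = 1)
    (hn₄ : Odd n₄ → n₄ % 4 = 1)
    (hs : 4 * (r₁ ^ 2 + r₂ ^ 2) + 4 * (r₃ ^ 2 + r₄ ^ 2) + 8 * (m₁ + m₂) = 8 * s)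
    (hd : n₁ + n₂ + n₃ + n₄ = 2 * (s - 4 * d)) :
    2 ^ 15 ∣ D ∧
      ∀ t, Odd t → D = 2 ^ 15 * t → n₁ % 8 = 5 ∨ n₂ % 8 = 5 ∨ n₃ % 8 = 5 ∨ n₄ % 8 = 5 := by
  wlog h : r₁ % 2 = 0 ∧ r₂ % 2 = 0 generalizing r₁ r₂ r₃ r₄
  · refine this (r₁ := r₃) (r₂ := r₄) (r₃ := r₁) (r₄ := r₂) hr.symm ?_ ?_ (hr.resolve_left h)
    · rw [hD, mul_comm (r₁ * r₂)]
    · rw [add_comm (4 * (r₃ ^ 2 + r₄ ^ 2)), hs]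
  obtain ⟨q₁, rfl⟩ := Int.dvd_of_emod_eq_zero h.1
  obtain ⟨q₂, rfl⟩ := Int.dvd_of_emod_eq_zero h.2
  obtain ⟨m, hm'⟩ : (2 : ℤ) ∣ m₁ * m₂ := by
    rw [← even_iff_two_dvd, Int.even_mul]
    rw [Int.odd_add, ← Int.not_even_iff_odd] at hm
    tauto
  refine ⟨⟨q₁ * q₂ * r₃ * r₄ * m * (n₁ * n₂ * n₃ * n₄), ?_⟩, fun t ht htD => ?_⟩
  · rw [hD]
    linear_combination 2 ^ 14 * (q₁ * q₂ * r₃ * r₄ * (n₁ * n₂ * n₃ * n₄)) * hm'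
  · refine exists_emod_eight_eq_five (q₁ := q₁) (q₂ := q₂) (p₁ := r₃) (p₂ := r₄) (s := s) (d := d)
      ht ?_ hm hm₁ hm₂ hn₁ hn₂ hn₃ hn₄ ?_ hd
    · rw [hD] at htD
      linarith
    · linear_combination hs

theorem exists_fourierNorm_eq_two_mul {a : ZMod 4 × ZMod 4 → ℤ} (h0 : fourierRe a (0, 0) % 2 = 0)
    (c : ZMod 4 × ZMod 4) :
    ∃ n : ℤ, fourierNorm a c = 2 * n ∧ (Odd n → n % 4 = 1) ∧
      (n % 8 = 5 → ∃ p ∈ Pset, p ∣ fourierNorm a c) := by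
  have := fourierRe_add_fourierIm_emod_two a c
  obtain ⟨u, v, huv⟩ := exists_eq_two_mul_of_even_add (x := fourierRe a c) (y := fourierIm a c)
    (by omega)
  refine ⟨u ^ 2 + v ^ 2, huv, sq_add_sq_emod_four_of_odd, fun h => ?_⟩
  obtain ⟨p, hp, hpd⟩ := exists_mem_Pset_dvd h
  exact ⟨p, hp, by rw [fourierNorm, huv]; exact hpd.mul_left 2⟩

theorem exists_fourier_eq_two_mul {a : ZMod 4 × ZMod 4 → ℤ} (h0 : fourierRe a (0, 0) % 2 = 0)
    {c : ZMod 4 × ZMod 4} (hc : (fourierRe a (0, 0) - fourierRe a (2 * c)) % 4 = 0) :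
    ∃ x y : ℤ, fourierRe a c = 2 * x ∧ fourierIm a c = 2 * y ∧
      fourierNorm a c = 4 * (x ^ 2 + y ^ 2) := by
  have h1 := fourierRe_add_fourierIm_emod_two a c
  have h2 := two_mul_fourierIm_emod_four a c
  obtain ⟨y, hy⟩ : (2 : ℤ) ∣ fourierIm a c := by omega
  obtain ⟨x, hx⟩ : (2 : ℤ) ∣ fourierRe a c := by omega
  refine ⟨x, y, hx, hy, ?_⟩
  rw [fourierNorm, hx, hy]
  ring

theorem fourierRe_emod_two {a : ZMod 4 × ZMod 4 → ℤ} (c : ZMod 4 × ZMod 4) :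
    (fourierRe a (2 * c) - fourierRe a (0, 0)) % 2 = 0 := by
  have := two_mul_fourierIm_emod_four a c
  omega

theorem exists_fourierNorm_eq_four_mul {a : ZMod 4 × ZMod 4 → ℤ}
    (h0 : fourierRe a (0, 0) % 2 = 0)
    (h2 : (fourierRe a (0, 0) - fourierRe a (2, 0)) % 4 = 0)
    (h3 : (fourierRe a (0, 0) - fourierRe a (0, 2)) % 4 ≠ 0) :
    ∃ m₁ m₂ : ℤ, fourierNorm a (1, 0) = 4 * m₁ ∧ fourierNorm a (1, 2) = 4 * m₂ ∧ Odd (m₁ + m₂) ∧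
      (Odd m₁ → m₁ % 4 = 1) ∧ (Odd m₂ → m₂ % 4 = 1) := by
  obtain ⟨x₁, y₁, hx₁, hy₁, hn₁⟩ := exists_fourier_eq_two_mul h0 (c := (1, 0)) h2
  obtain ⟨x₂, y₂, hx₂, hy₂, hn₂⟩ := exists_fourier_eq_two_mul h0 (c := (1, 2)) h2
  refine ⟨_, _, hn₁, hn₂, ?_, sq_add_sq_emod_four_of_odd, sq_add_sq_emod_four_of_odd⟩
  have hdiff := fourier_sub_fourier_emod_four a
  have hpar : (fourierRe a (0, 2) - fourierRe a (0, 0)) % 2 = 0 := fourierRe_emod_two (0, 1)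
  have : Odd (x₁ + y₁ + (x₂ + y₂)) := Int.odd_iff.mpr (by omega)
  simpa [Int.odd_add, Int.even_add, Int.even_pow, Int.odd_pow] using this

theorem exists_fourierRe_eq_two_mul {a : ZMod 4 × ZMod 4 → ℤ}
    (h0 : fourierRe a (0, 0) % 2 = 0)
    (h2 : (fourierRe a (0, 0) - fourierRe a (2, 0)) % 4 = 0)
    (h3 : (fourierRe a (0, 0) - fourierRe a (0, 2)) % 4 ≠ 0) :
    ∃ r₁ r₂ r₃ r₄ : ℤ,
      fourierRe a (0, 0) = 2 * r₁ ∧ fourierRe a (2, 0) = 2 * r₂ ∧ fourierRe a (0, 2) = 2 * r₃ ∧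
        fourierRe a (2, 2) = 2 * r₄ ∧
        ((r₁ % 2 = 0 ∧ r₂ % 2 = 0) ∨ (r₃ % 2 = 0 ∧ r₄ % 2 = 0)) := by
  have hsum := sum_fourierRe_emod_four a
  have hpar : (fourierRe a (0, 2) - fourierRe a (0, 0)) % 2 = 0 := fourierRe_emod_two (0, 1)
  obtain ⟨r₁, hr₁⟩ : (2 : ℤ) ∣ fourierRe a (0, 0) := by omega
  obtain ⟨r₂, hr₂⟩ : (2 : ℤ) ∣ fourierRe a (2, 0) := by omega
  obtain ⟨r₃, hr₃⟩ : (2 : ℤ) ∣ fourierRe a (0, 2) := by omega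
  obtain ⟨r₄, hr₄⟩ : (2 : ℤ) ∣ fourierRe a (2, 2) := by omega
  exact ⟨r₁, r₂, r₃, r₄, hr₁, hr₂, hr₃, hr₄, by omega⟩

theorem dvd_groupDet_and_exists_mem_Pset {a : ZMod 4 × ZMod 4 → ℤ}
    (h0 : fourierRe a (0, 0) % 2 = 0)
    (h2 : (fourierRe a (0, 0) - fourierRe a (2, 0)) % 4 = 0)
    (h3 : (fourierRe a (0, 0) - fourierRe a (0, 2)) % 4 ≠ 0) :
    2 ^ 15 ∣ groupDet4x4 a ∧
      ∀ t, Odd t → groupDet4x4 a = 2 ^ 15 * t → ∃ p ∈ Pset, p ∣ groupDet4x4 a := by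
  obtain ⟨m₁, m₂, hm₁, hm₂, hm, hmo₁, hmo₂⟩ := exists_fourierNorm_eq_four_mul h0 h2 h3
  obtain ⟨r₁, r₂, r₃, r₄, hr₁, hr₂, hr₃, hr₄, hr⟩ := exists_fourierRe_eq_two_mul h0 h2 h3
  obtain ⟨n₁, hn₁, ho₁, hp₁⟩ := exists_fourierNorm_eq_two_mul h0 (0, 1)
  obtain ⟨n₂, hn₂, ho₂, hp₂⟩ := exists_fourierNorm_eq_two_mul h0 (2, 1)
  obtain ⟨n₃, hn₃, ho₃, hp₃⟩ := exists_fourierNorm_eq_two_mul h0 (1, 1)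
  obtain ⟨n₄, hn₄, ho₄, hp₄⟩ := exists_fourierNorm_eq_two_mul h0 (1, 3)
  obtain ⟨s, d, hs, hd⟩ := exists_parseval a
  have hdet := groupDet_eq a
  rw [hr₁, hr₂, hr₃, hr₄, hm₁, hm₂] at hs hdet
  rw [hn₁, hn₂, hn₃, hn₄] at hd hdet
  obtain ⟨hdvd, hfive⟩ := dvd_and_exists_emod_eight_eq_five (D := groupDet4x4 a) (s := s) (d := d)
    hr (by rw [hdet]; ring) hm hmo₁ hmo₂ ho₁ ho₂ ho₃ ho₄ (by linear_combination hs) (by omega)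
  refine ⟨hdvd, fun t ht htD => ?_⟩
  rw [groupDet_eq]
  rcases hfive t ht htD with h | h | h | h
  · obtain ⟨p, hp, hpd⟩ := hp₁ h
    exact ⟨p, hp, (((hpd.mul_right _).mul_right _).mul_right _).mul_left _⟩
  · obtain ⟨p, hp, hpd⟩ := hp₂ h
    exact ⟨p, hp, (((hpd.mul_left _).mul_right _).mul_right _).mul_left _⟩
  · obtain ⟨p, hp, hpd⟩ := hp₃ h
    exact ⟨p, hp, ((hpd.mul_left _).mul_right _).mul_left _⟩
  · obtain ⟨p, hp, hpd⟩ := hp₄ h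
    exact ⟨p, hp, (hpd.mul_left _).mul_left _⟩

theorem fourierRe_comp_swap (a : ZMod 4 × ZMod 4 → ℤ) (c : ZMod 4 × ZMod 4) :
    fourierRe (a ∘ AddEquiv.prodComm) c = fourierRe a c.swap := by
  rw [fourierRe, fourierRe, ← (AddEquiv.prodComm (M := ZMod 4) (N := ZMod 4)).toEquiv.sum_comp]
  refine Finset.sum_congr rfl fun u _ => ?_
  simp [pairing, add_comm]

theorem fourierRe_comp_shear (a : ZMod 4 × ZMod 4 → ℤ) (c : ZMod 4 × ZMod 4) :
    fourierRe (a ∘ shear) c = fourierRe a (c.1, c.1 + c.2) := by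
  rw [fourierRe, fourierRe,
    ← shear.toEquiv.sum_comp fun u => a u * cosQuarter (pairing (c.1, c.1 + c.2) u)]
  refine Finset.sum_congr rfl fun u _ => ?_
  have : pairing (c.1, c.1 + c.2) (shear u) = pairing c u := by
    simp only [pairing, shear, AddEquiv.coe_mk, Equiv.coe_fn_mk]
    ring
  simp [this]

theorem even_fourierRe_of_even_groupDet {a : ZMod 4 × ZMod 4 → ℤ} (h : Even (groupDet4x4 a)) :
    fourierRe a (0, 0) % 2 = 0 := by
  rw [groupDet_eq] at h
  have even_norm {c : ZMod 4 × ZMod 4} (hc : Even (fourierNorm a c)) :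
      fourierRe a (0, 0) % 2 = 0 := by
    have hsum : Even (fourierRe a c + fourierIm a c) := by
      simpa [fourierNorm, Int.even_add, Int.even_pow] using hc
    rw [Int.even_iff] at hsum
    have := fourierRe_add_fourierIm_emod_two a c
    omega
  have even_re {c : ZMod 4 × ZMod 4} (d : ZMod 4 × ZMod 4) (hd : 2 * d = c)
      (hc : Even (fourierRe a c)) : fourierRe a (0, 0) % 2 = 0 := by
    rw [Int.even_iff, ← hd] at hc
    have := fourierRe_emod_two (a := a) d
    omega
  simp only [Int.even_mul] at h
  rcases h with ((((h | h) | h) | h) | h | h) | ((h | h) | h) | h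
  · exact Int.even_iff.mp h
  · exact even_re (1, 0) rfl h
  · exact even_re (0, 1) rfl h
  · exact even_re (1, 1) rfl h
  all_goals exact even_norm h

theorem dvd_groupDet_of_emod_four_eq_zero {a : ZMod 4 × ZMod 4 → ℤ}
    (h0 : fourierRe a (0, 0) % 2 = 0)
    (h2 : (fourierRe a (0, 0) - fourierRe a (2, 0)) % 4 = 0)
    (h3 : (fourierRe a (0, 0) - fourierRe a (0, 2)) % 4 = 0) :
    2 ^ 16 ∣ groupDet4x4 a := by
  have hsum := sum_fourierRe_emod_four a
  have h4 : (fourierRe a (0, 0) - fourierRe a (2, 2)) % 4 = 0 := by omega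
  have four_dvd (c : ZMod 4 × ZMod 4) (hc : (fourierRe a (0, 0) - fourierRe a (2 * c)) % 4 = 0) :
      4 ∣ fourierNorm a c := by
    obtain ⟨x, y, -, -, h⟩ := exists_fourier_eq_two_mul h0 hc
    exact ⟨_, h⟩
  have hre : (2 : ℤ) * 2 * 2 * 2 ∣ fourierRe a (0, 0) * fourierRe a (2, 0) * fourierRe a (0, 2) *
      fourierRe a (2, 2) := by
    refine mul_dvd_mul (mul_dvd_mul (mul_dvd_mul ?_ ?_) ?_) ?_ <;> omega
  have hnorm := mul_dvd_mul (mul_dvd_mul (mul_dvd_mul (four_dvd (0, 1) h3) (four_dvd (2, 1) h3))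
    (four_dvd (1, 1) h4)) (four_dvd (1, 3) h4)
  have hnorm' := mul_dvd_mul (four_dvd (1, 0) h2) (four_dvd (1, 2) h2)
  rw [groupDet_eq]
  exact mul_dvd_mul (mul_dvd_mul hre hnorm') hnorm

theorem dvd_groupDet_and_exists_mem_Pset_of_even {a : ZMod 4 × ZMod 4 → ℤ}
    (h : Even (groupDet4x4 a)) :
    2 ^ 15 ∣ groupDet4x4 a ∧
      ∀ t, Odd t → groupDet4x4 a = 2 ^ 15 * t → ∃ p ∈ Pset, p ∣ groupDet4x4 a := by
  have h0 := even_fourierRe_of_even_groupDet h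
  have hsum := sum_fourierRe_emod_four a
  by_cases h2 : (fourierRe a (0, 0) - fourierRe a (2, 0)) % 4 = 0
  · by_cases h3 : (fourierRe a (0, 0) - fourierRe a (0, 2)) % 4 = 0
    · obtain ⟨k, hk⟩ := dvd_groupDet_of_emod_four_eq_zero h0 h2 h3
      refine ⟨⟨2 * k, by omega⟩, fun t ht htD => ?_⟩
      rw [Int.odd_iff] at ht
      omega
    · exact dvd_groupDet_and_exists_mem_Pset h0 h2 h3
  · by_cases h3 : (fourierRe a (0, 0) - fourierRe a (0, 2)) % 4 = 0
    · rw [← groupDet_comp_equiv a AddEquiv.prodComm]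
      apply dvd_groupDet_and_exists_mem_Pset <;> simpa only [fourierRe_comp_swap]
    · rw [← groupDet_comp_equiv a shear]
      have hpar₂ : (fourierRe a (2, 0) - fourierRe a (0, 0)) % 2 = 0 := fourierRe_emod_two (1, 0)
      have hpar₃ : (fourierRe a (0, 2) - fourierRe a (0, 0)) % 2 = 0 := fourierRe_emod_two (0, 1)
      have h22 : (fourierRe a (0, 0) - fourierRe a (2, 2)) % 4 = 0 := by omega
      apply dvd_groupDet_and_exists_mem_Pset <;>
        simpa only [fourierRe_comp_shear, zero_add, add_zero]

end GroupDetC4Sq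

theorem stmt15 :
    (∀ x ∈ S44, Even x → (2 ^ 15 : ℤ) ∣ x) ∧
    (∀ x ∈ S44, (∃ t : ℤ, Odd t ∧ x = 2 ^ 15 * t) →
      ∃ p ∈ Pset, ∃ m : ℤ, x = 2 ^ 15 * p * (2 * m + 1)) := by
  constructor
  · rintro _ ⟨a, rfl⟩ h
    exact (GroupDetC4Sq.dvd_groupDet_and_exists_mem_Pset_of_even h).1
  · rintro _ ⟨a, rfl⟩ ⟨t, ht, hx⟩
    have heven : Even (groupDet4x4 a) := by
      rw [hx]
      exact (even_two.pow_of_ne_zero (by norm_num)).mul_right t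
    obtain ⟨p, hp, hpd⟩ :=
      (GroupDetC4Sq.dvd_groupDet_and_exists_mem_Pset_of_even heven).2 t ht hx
    have hcop : IsCoprime p (2 ^ 15) := by
      refine IsCoprime.pow_right ?_
      rw [isCoprime_comm, Int.isCoprime_two_left]
      have := hp.2.2
      rw [Int.ModEq] at this
      exact Int.odd_iff.mpr (by omega)
    rw [hx] at hpd
    obtain ⟨u, rfl⟩ := hcop.dvd_of_dvd_mul_left hpd
    obtain ⟨m, rfl⟩ := (Int.odd_mul.mp ht).2
    exact ⟨p, hp, m, by rw [hx, mul_assoc]⟩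
end

section
/- For every integer m, the integers 16m+1, 2^16·(4m+1), 2^16·(4m−1), and 2^16·(2m) all belong to S(C_4^2); moreover, for every integer m and every prime p ∈ P, the integer 2^15 · p · (2m+1) belongs to S(C_4^2). -/
open Matrix Complex

/-- A family of characters, linearly independent as functions, diagonalizes every circulant
matrix. -/
theorem det_circulant_eq_prod {G R : Type*} [AddCommGroup G] [Fintype G] [DecidableEq G]
    [CommRing R] [IsDomain R] (χ : G → AddChar G R)
    (hχ : (Matrix.of fun g k => χ k g).det ≠ 0) (a : G → R) :
    (circulant a).det = ∏ k, ∑ h, a h * χ k (-h) := by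
  have hdiag : circulant a * (Matrix.of fun g k => χ k g) =
      (Matrix.of fun g k => χ k g) * diagonal fun k => ∑ h, a h * χ k (-h) := by
    ext g k
    rw [mul_diagonal, mul_apply, of_apply, Finset.mul_sum,
      ← Equiv.sum_comp (Equiv.subLeft g)]
    refine Finset.sum_congr rfl fun h _ => ?_
    rw [circulant_apply, of_apply, Equiv.subLeft_apply, sub_sub_cancel, sub_eq_add_neg,
      AddChar.map_add_eq_mul]
    ring
  have hdet := congrArg det hdiag
  rw [det_mul, det_mul, det_diagonal, mul_comm] at hdet
  exact mul_left_cancel₀ hχ hdet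

/-- The character `x ↦ i ^ x` of `ℤ/4ℤ` with values in the Gaussian integers. -/
def gaussChar : AddChar (ZMod 4) GaussianInt where
  toFun x := ![1, ⟨0, 1⟩, -1, ⟨0, -1⟩] x
  map_zero_eq_one' := by decide
  map_add_eq_mul' := by decide

/-- The character of `(ℤ/4ℤ)²` indexed by `k`. -/
def gaussChar₂ (k : ZMod 4 × ZMod 4) : AddChar (ZMod 4 × ZMod 4) GaussianInt where
  toFun g := gaussChar (k.1 * g.1) * gaussChar (k.2 * g.2)
  map_zero_eq_one' := by simp
  map_add_eq_mul' g h := by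
    simp only [Prod.fst_add, Prod.snd_add, mul_add, AddChar.map_add_eq_mul]
    ring

theorem det_gaussChar_ne_zero :
    (Matrix.of fun g k : ZMod 4 => gaussChar (k * g)).det ≠ 0 := by
  intro h
  have hsq : (Matrix.of fun g k : ZMod 4 => gaussChar (k * g)) *
      (Matrix.of fun g k : ZMod 4 => gaussChar (-(k * g))) = diagonal fun _ => 4 := by
    decide
  have := congrArg det hsq
  rw [det_mul, h, zero_mul, det_diagonal] at this
  exact absurd this (by decide)

theorem det_gaussChar₂_ne_zero :
    (Matrix.of fun g k : ZMod 4 × ZMod 4 => gaussChar₂ k g).det ≠ 0 := by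
  have h : (Matrix.of fun g k : ZMod 4 × ZMod 4 => gaussChar₂ k g) =
      kroneckerMap (· * ·) (Matrix.of fun g k : ZMod 4 => gaussChar (k * g))
        (Matrix.of fun g k : ZMod 4 => gaussChar (k * g)) := rfl
  rw [h, det_kronecker]
  exact mul_ne_zero (pow_ne_zero _ det_gaussChar_ne_zero) (pow_ne_zero _ det_gaussChar_ne_zero)

/-- The value of the integer array `a` at the character `-k`. -/
def charValue (a : ZMod 4 × ZMod 4 → ℤ) (k : ZMod 4 × ZMod 4) : GaussianInt :=
  ∑ h, (a h : GaussianInt) * gaussChar₂ k (-h)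

theorem groupDet4x4_eq_prod_s19 (a : ZMod 4 × ZMod 4 → ℤ) :
    (groupDet4x4 a : GaussianInt) = ∏ k, charValue a k := by
  rw [groupDet4x4, Int.cast_det]
  exact det_circulant_eq_prod gaussChar₂ det_gaussChar₂_ne_zero fun h => (a h : GaussianInt)

/-- The array `b` shifted by `m` everywhere and by `k, l, -k, -l` on its rows. These shifts
change `charValue b` only at the trivial character and at one pair of conjugate characters. -/
def shiftedArray (b : Matrix (ZMod 4) (ZMod 4) ℤ) (m k l : ℤ) : ZMod 4 × ZMod 4 → ℤ :=
  fun g => b g.1 g.2 + m + k * ![1, 0, -1, 0] g.1 + l * ![0, 1, 0, -1] g.1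

theorem charValue_shiftedArray (b : Matrix (ZMod 4) (ZMod 4) ℤ) (m k l : ℤ)
    (r : ZMod 4 × ZMod 4) :
    charValue (shiftedArray b m k l) r = charValue (fun g => b g.1 g.2) r +
      m * (if r = 0 then 16 else 0) +
      k * (if r = (1, 0) ∨ r = (3, 0) then 8 else 0) +
      l * (if r = (1, 0) then ⟨0, -8⟩ else if r = (3, 0) then ⟨0, 8⟩ else 0) := by
  have hm : ∀ r, ∑ h, gaussChar₂ r (-h) = if r = 0 then 16 else 0 := by decide +kernel
  have hk : ∀ r, ∑ h : ZMod 4 × ZMod 4, ((![1, 0, -1, 0] h.1 : ℤ) : GaussianInt) *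
      gaussChar₂ r (-h) = if r = (1, 0) ∨ r = (3, 0) then 8 else 0 := by decide +kernel
  have hl : ∀ r, ∑ h : ZMod 4 × ZMod 4, ((![0, 1, 0, -1] h.1 : ℤ) : GaussianInt) *
      gaussChar₂ r (-h) = if r = (1, 0) then ⟨0, -8⟩ else if r = (3, 0) then ⟨0, 8⟩ else 0 := by
    decide +kernel
  rw [← hm, ← hk, ← hl, Finset.mul_sum, Finset.mul_sum, Finset.mul_sum, charValue,
    charValue, ← Finset.sum_add_distrib, ← Finset.sum_add_distrib, ← Finset.sum_add_distrib]
  refine Finset.sum_congr rfl fun h _ => ?_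
  simp only [shiftedArray]
  push_cast
  ring

/-- The group determinants of shifted arrays, in terms of the character values `c` and
`⟨x, ± y⟩` of `b` that the shifts change and the product `e` of the others. -/
theorem shift_mem_S44 {b : Matrix (ZMod 4) (ZMod 4) ℤ} {c x y e : ℤ}
    (h0 : charValue (fun g => b g.1 g.2) 0 = c)
    (h1 : charValue (fun g => b g.1 g.2) (1, 0) = ⟨x, -y⟩)
    (h3 : charValue (fun g => b g.1 g.2) (3, 0) = ⟨x, y⟩)
    (he : ∏ r ∈ {0, (1, 0), (3, 0)}ᶜ, charValue (fun g => b g.1 g.2) r = e) (m k l : ℤ) :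
    (16 * m + c) * e * ((x + 8 * k) ^ 2 + (y + 8 * l) ^ 2) ∈ S44 := by
  refine ⟨shiftedArray b m k l, ?_⟩
  have hrest : ∏ r ∈ {0, (1, 0), (3, 0)}ᶜ, charValue (shiftedArray b m k l) r = e := by
    rw [← he]
    refine Finset.prod_congr rfl fun r hr => ?_
    simp only [Finset.mem_compl, Finset.mem_insert, Finset.mem_singleton, not_or] at hr
    simp [charValue_shiftedArray, hr]
  have hprod := groupDet4x4_eq_prod_s19 (shiftedArray b m k l)
  rw [← Finset.prod_mul_prod_compl {0, (1, 0), (3, 0)}, hrest,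
    Finset.prod_insert (by decide), Finset.prod_insert (by decide), Finset.prod_singleton,
    charValue_shiftedArray, charValue_shiftedArray, charValue_shiftedArray,
    h0, h1, h3] at hprod
  have hre := congrArg Zsqrtd.re hprod
  simp [show (0 : ZMod 4 × ZMod 4) ≠ (1, 0) by decide,
    show (0 : ZMod 4 × ZMod 4) ≠ (3, 0) by decide, show (1 : ZMod 4) ≠ 0 by decide,
    show (3 : ZMod 4) ≠ 0 by decide, show (3 : ZMod 4) ≠ 1 by decide] at hre
  rw [hre]
  ring

theorem exists_one_add_eight_mul_sq {u : ℤ} (hu : u ^ 2 % 16 = 1) :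
    ∃ l, (1 + 8 * l) ^ 2 = u ^ 2 := by
  have hcases : u % 8 = 1 ∨ u % 8 = 7 := by
    have h : ∀ u : ZMod 16, u ^ 2 = 1 → u.val % 8 = 1 ∨ u.val % 8 = 7 := by decide
    have := h u (by exact_mod_cast (ZMod.intCast_eq_intCast_iff' (u ^ 2) 1 16).mpr hu)
    have hval := ZMod.val_intCast (n := 16) u
    omega
  rcases hcases with h | h
  · exact ⟨u / 8, by rw [show 1 + 8 * (u / 8) = u by omega]⟩
  · exact ⟨-u / 8, by rw [show 1 + 8 * (-u / 8) = -u by omega, neg_sq]⟩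

theorem exists_three_add_eight_mul_sq {u : ℤ} (hu : u ^ 2 % 16 = 9) :
    ∃ k, (3 + 8 * k) ^ 2 = u ^ 2 := by
  have hcases : u % 8 = 3 ∨ u % 8 = 5 := by
    have h : ∀ u : ZMod 16, u ^ 2 = 9 → u.val % 8 = 3 ∨ u.val % 8 = 5 := by decide
    have := h u (by exact_mod_cast (ZMod.intCast_eq_intCast_iff' (u ^ 2) 9 16).mpr hu)
    have hval := ZMod.val_intCast (n := 16) u
    omega
  rcases hcases with h | h
  · exact ⟨u / 8, by rw [show 3 + 8 * (u / 8) = u by omega]⟩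
  · exact ⟨-u / 8, by rw [show 3 + 8 * (-u / 8) = -u by omega, neg_sq]⟩

theorem sq_emod_sixteen (u : ℤ) :
    u ^ 2 % 16 = 0 ∨ u ^ 2 % 16 = 1 ∨ u ^ 2 % 16 = 4 ∨ u ^ 2 % 16 = 9 := by
  have h : ∀ u : ZMod 16, (u ^ 2).val = 0 ∨ (u ^ 2).val = 1 ∨ (u ^ 2).val = 4 ∨
      (u ^ 2).val = 9 := by decide
  have hval := ZMod.val_intCast (n := 16) (u ^ 2)
  push_cast at hval
  have := h u
  omega

theorem exists_sq_add_sq_eq_two_mul {p : ℤ} (hp : p ∈ Pset) :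
    ∃ k l : ℤ, (3 + 8 * k) ^ 2 + (1 + 8 * l) ^ 2 = 2 * p := by
  obtain ⟨hprime, hpos, hmod⟩ := hp
  lift p to ℕ using hpos.le
  have hmod : (p : ℤ) % 8 = (-3) % 8 := hmod
  have : Fact p.Prime := ⟨Nat.prime_iff_prime_int.mpr hprime⟩
  obtain ⟨a, b, hab⟩ := Nat.Prime.sq_add_sq (p := p) (by omega)
  obtain ⟨u, v, huv⟩ : ∃ u v : ℤ, u ^ 2 + v ^ 2 = 2 * p :=
    ⟨a + b, a - b, by rw [← hab]; push_cast; ring⟩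
  have hu := sq_emod_sixteen u
  have hv := sq_emod_sixteen v
  have hcases : u ^ 2 % 16 = 9 ∧ v ^ 2 % 16 = 1 ∨ u ^ 2 % 16 = 1 ∧ v ^ 2 % 16 = 9 := by omega
  rcases hcases with ⟨h9, h1⟩ | ⟨h1, h9⟩ <;>
  · obtain ⟨k, hk⟩ := exists_three_add_eight_mul_sq h9
    obtain ⟨l, hl⟩ := exists_one_add_eight_mul_sq h1
    exact ⟨k, l, by linarith⟩

theorem stmt19 (m : ℤ) :
    (16 * m + 1) ∈ S44 ∧
    (2 ^ 16 * (4 * m + 1)) ∈ S44 ∧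
    (2 ^ 16 * (4 * m - 1)) ∈ S44 ∧
    (2 ^ 16 * (2 * m)) ∈ S44 ∧
    (∀ p ∈ Pset, (2 ^ 15 * p * (2 * m + 1)) ∈ S44) := by
  refine ⟨?_, ?_, ?_, ?_, fun p hp => ?_⟩
  · convert shift_mem_S44 (b := !![1, 0, 0, 0; 0, 0, 0, 0; 0, 0, 0, 0; 0, 0, 0, 0])
      (c := 1) (x := 1) (y := 0) (e := 1) (by decide +kernel) (by decide +kernel)
      (by decide +kernel) (by decide +kernel) m 0 0 using 1
    ring
  · convert shift_mem_S44 (b := !![0, 1, 0, 0; 0, 0, 1, 0; 0, 0, 0, 0; 2, 0, 0, 0])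
      (c := 4) (x := 1) (y := -1) (e := 2 ^ 13) (by decide +kernel) (by decide +kernel)
      (by decide +kernel) (by decide +kernel) m 0 0 using 1
    ring
  · convert shift_mem_S44 (b := !![0, -1, 1, 0; 1, 1, 1, 1; 0, 0, 0, 0; 0, 0, 0, 0])
      (c := 4) (x := 0) (y := 4) (e := -2 ^ 10) (by decide +kernel) (by decide +kernel)
      (by decide +kernel) (by decide +kernel) (-m) 0 0 using 1
    ring
  · convert shift_mem_S44 (b := !![0, -1, 0, 0; 1, 0, 0, 0; 1, -1, 0, 0; 0, 0, 0, 0])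
      (c := 0) (x := -1) (y := 1) (e := -2 ^ 12) (by decide +kernel) (by decide +kernel)
      (by decide +kernel) (by decide +kernel) (-m) 0 0 using 1
    ring
  · obtain ⟨k, l, hkl⟩ := exists_sq_add_sq_eq_two_mul hp
    obtain ⟨n, hn | hn | hn | hn⟩ : ∃ n : ℤ, m = 4 * n ∨ m = 4 * n + 1 ∨ m = 4 * n + 2 ∨
        m = 4 * n + 3 := ⟨m / 4, by omega⟩
    · convert shift_mem_S44 (b := !![0, 1, -1, 0; 0, 0, 0, 1; -1, -1, -1, 0; 0, 0, 0, 0])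
        (c := -2) (x := 3) (y := 1) (e := -2 ^ 13) (by decide +kernel) (by decide +kernel)
        (by decide +kernel) (by decide +kernel) (-n) k l using 1
      rw [hkl, hn]
      ring
    · convert shift_mem_S44 (b := !![0, 1, 1, 0; 1, 0, 1, 1; -1, 0, 0, 0; 1, 0, 1, 0])
        (c := 6) (x := 3) (y := 1) (e := 2 ^ 13) (by decide +kernel) (by decide +kernel)
        (by decide +kernel) (by decide +kernel) n k l using 1
      rw [hkl, hn]
      ring
    · convert shift_mem_S44 (b := !![1, 1, 1, 1; 0, 0, 0, 1; 0, 0, 0, 1; -1, 1, 0, 0])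
        (c := 6) (x := 3) (y := 1) (e := -2 ^ 13) (by decide +kernel) (by decide +kernel)
        (by decide +kernel) (by decide +kernel) (-n - 1) k l using 1
      rw [hkl, hn]
      ring
    · convert shift_mem_S44 (b := !![1, 1, 1, 0; 0, 0, 1, -1; 0, 0, 0, 0; 0, -1, 0, 0])
        (c := 2) (x := 3) (y := 1) (e := -2 ^ 13) (by decide +kernel) (by decide +kernel)
        (by decide +kernel) (by decide +kernel) (-n - 1) k l using 1
      rw [hkl, hn]
      ring
end
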